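/- arXiv:2208.13890 — 2 statements merged into one kernel-verified Lean document; each statement's English description precedes it below -/
import Mathlib

section
/- The fundamental group of a closed surface is not isomorphic to a free product of two non-trivial groups. -/
/-!
Suppose that `π₁(S) ≅ G ∗ H`, and choose `a ≠ 1` in `G` and `b ≠ 1` in `H`. There is an almost
invariant function `e : G ∗ H → ZMod 2` which jumps only at the identity, and only in the direction
of `H`; it separates the two ends of the infinite cyclic group generated by `t = a * b`.

The universal covering of `S` is a simply connected surface `X` on which `π₁(S)` acts properly and
cocompactly. With coefficients in `ZMod 2`, a `1`-cochain which is closed away from finitely many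
points of `X` and vanishes away from a compact set has an even number of poles. Since `X` is
connected, some compactly supported cochain `d` has exactly the poles `p` and `t • p`, and it can be
modified so that the poles of consecutive translates `t ^ n • d` cancel. The sum of all translates
is then closed, hence the coboundary of some `ψ`, as `X` is simply connected. The sum of the
translates with `0 ≤ n` has the single pole `p`. Cocompactness turns `e` into a function `φ` on `X`
which is locally constant away from a compact set, and there equal to `1` near the translates with
`0 ≤ n` and to `0` near the others. Subtracting the coboundary of `φ * ψ` from the half-sum
therefore leaves a cochain which vanishes away from a compact set and has one pole, a contradiction.
-/

open Topology Filter Set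

/-! ### Cochains and their germs -/

namespace AlexanderSpanier

variable {X Y : Type*}

/-- A `1`-cochain with coefficients in `ZMod 2`. Only germs along the diagonal matter. -/
abbrev Cochain (X : Type*) := X → X → ZMod 2

/-- The coboundary of a `0`-cochain. -/
def cobd (u : X → ZMod 2) : Cochain X := fun a b => u a + u b

/-- The pullback of a cochain along a map. -/
def pull (f : X → Y) (m : Cochain Y) : Cochain X := fun a b => m (f a) (f b)

theorem cochain_add_self (m : Cochain X) : m + m = 0 := by
  ext; exact CharTwo.add_self_eq_zero _

theorem cochain_add_add_cancel (m n : Cochain X) : m + n + n = m := by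
  rw [add_assoc, cochain_add_self, add_zero]

theorem cobd_add (u v : X → ZMod 2) : cobd (u + v) = cobd u + cobd v := by
  ext a b; exact add_add_add_comm _ _ _ _

@[simp]
theorem cobd_zero : cobd (0 : X → ZMod 2) = 0 := rfl

theorem pull_add_cobd (f : X → Y) (m : Cochain Y) (u : Y → ZMod 2) :
    pull f (m + cobd u) = pull f m + cobd (u ∘ f) := rfl

variable {m n : Cochain X}

/-- A cochain is supported in `C` if it vanishes on all pairs not contained in `C`; unlike the
support of germs, this is a condition on pairs of distant points too. -/
def SuppIn (m : Cochain X) (C : Set X) : Prop := ∀ a b, m a b ≠ 0 → a ∈ C ∧ b ∈ C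

theorem SuppIn.mono {C D : Set X} (h : SuppIn m C) (hCD : C ⊆ D) : SuppIn m D :=
  fun a b hab => ⟨hCD (h a b hab).1, hCD (h a b hab).2⟩

theorem SuppIn.add {C : Set X} (hm : SuppIn m C) (hn : SuppIn n C) : SuppIn (m + n) C := by
  intro a b h
  by_cases hab : m a b = 0
  · exact hn a b fun hab' => h (by rw [Pi.add_apply, Pi.add_apply, hab, hab', add_zero])
  · exact hm a b hab

open Classical in
/-- The cochain `m` cut off outside pairs of points of `C`. -/
noncomputable def restr (C : Set X) (m : Cochain X) : Cochain X :=
  fun a b => if a ∈ C ∧ b ∈ C then m a b else 0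

theorem restr_of_mem {C : Set X} {a b : X} (ha : a ∈ C) (hb : b ∈ C) : restr C m a b = m a b :=
  if_pos ⟨ha, hb⟩

theorem suppIn_restr (C : Set X) (m : Cochain X) : SuppIn (restr C m) C :=
  fun _ _ h => by_contra fun hab => h (if_neg hab)

variable [TopologicalSpace X] [TopologicalSpace Y] {x y : X}

/-- The germ of `m` at `y` vanishes. -/
def ZeroAt (m : Cochain X) (y : X) : Prop := ∀ᶠ p : X × X in 𝓝 (y, y), m p.1 p.2 = 0

/-- The germ of `m` at `y` is a coboundary; a cochain is closed if this holds at every point. -/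
def ClosedAt (m : Cochain X) (y : X) : Prop := ∃ u, ZeroAt (m + cobd u) y

/-- `m` is a coboundary on a punctured neighbourhood of `x`. -/
def ResTriv (m : Cochain X) (x : X) : Prop := ∃ u, ∀ᶠ y in 𝓝[≠] x, ZeroAt (m + cobd u) y

theorem zeroAt_of_mem_nhds {W : Set X} (hW : W ∈ 𝓝 y) (h : ∀ a ∈ W, ∀ b ∈ W, m a b = 0) :
    ZeroAt m y := by
  filter_upwards [prod_mem_nhds hW hW] with p hp using h _ hp.1 _ hp.2

theorem zeroAt_iff : ZeroAt m y ↔ ∃ W, IsOpen W ∧ y ∈ W ∧ ∀ a ∈ W, ∀ b ∈ W, m a b = 0 := by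
  constructor
  · intro h
    rw [ZeroAt, nhds_prod_eq] at h
    obtain ⟨s, hs, t, ht, hst⟩ := eventually_prod_iff.1 h
    obtain ⟨W, hW, hWo, hy⟩ := mem_nhds_iff.1 (hs.and ht)
    exact ⟨W, hWo, hy, fun a ha b hb => hst (hW ha).1 (hW hb).2⟩
  · rintro ⟨W, hW, hy, h⟩
    exact zeroAt_of_mem_nhds (hW.mem_nhds hy) h

theorem zeroAt_zero (y : X) : ZeroAt (0 : Cochain X) y := Eventually.of_forall fun _ => rfl

theorem ZeroAt.add (hm : ZeroAt m y) (hn : ZeroAt n y) : ZeroAt (m + n) y := by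
  filter_upwards [hm, hn] with p hmp hnp
  rw [Pi.add_apply, Pi.add_apply, hmp, hnp, add_zero]

theorem zeroAt_add_iff (hn : ZeroAt n y) : ZeroAt (m + n) y ↔ ZeroAt m y :=
  ⟨fun h => cochain_add_add_cancel m n ▸ h.add hn, fun h => h.add hn⟩

theorem zeroAt_sum {ι : Type*} {s : Finset ι} {c : ι → Cochain X}
    (h : ∀ i ∈ s, ZeroAt (c i) y) : ZeroAt (∑ i ∈ s, c i) y :=
  Finset.sum_induction _ (ZeroAt · y) (fun _ _ => ZeroAt.add) (zeroAt_zero y) h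

theorem ZeroAt.eventually (hm : ZeroAt m y) : ∀ᶠ z in 𝓝 y, ZeroAt m z := by
  obtain ⟨W, hW, hy, h⟩ := zeroAt_iff.1 hm
  filter_upwards [hW.mem_nhds hy] with z hz using zeroAt_iff.2 ⟨W, hW, hz, h⟩

theorem isOpen_setOf_zeroAt (m : Cochain X) : IsOpen {y | ZeroAt m y} :=
  isOpen_iff_mem_nhds.2 fun _ => ZeroAt.eventually

protected theorem ZeroAt.pull {f : X → Y} {m : Cochain Y} (hf : ContinuousAt f x)
    (hm : ZeroAt m (f x)) : ZeroAt (pull f m) x :=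
  (ContinuousAt.prodMap' hf hf).eventually hm

theorem zeroAt_of_pull {f : X → Y} (hf : IsOpenMap f) {m : Cochain Y}
    (hm : ZeroAt (pull f m) x) : ZeroAt m (f x) := by
  obtain ⟨W, hW, hx, h⟩ := zeroAt_iff.1 hm
  refine zeroAt_iff.2 ⟨f '' W, hf _ hW, ⟨x, hx, rfl⟩, ?_⟩
  rintro _ ⟨a, ha, rfl⟩ _ ⟨b, hb, rfl⟩
  exact h a ha b hb

theorem zeroAt_cobd_iff {u : X → ZMod 2} : ZeroAt (cobd u) y ↔ ∀ᶠ z in 𝓝 y, u z = u y := by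
  constructor
  · intro h
    obtain ⟨W, hW, hy, h⟩ := zeroAt_iff.1 h
    filter_upwards [hW.mem_nhds hy] with z hz using CharTwo.add_eq_zero.1 (h z hz y hy)
  · intro h
    exact zeroAt_of_mem_nhds h fun a ha b hb => CharTwo.add_eq_zero.2 (ha.trans hb.symm)

theorem zeroAt_add_cobd_iff {u v : X → ZMod 2} (hu : ZeroAt (m + cobd u) y) :
    ZeroAt (m + cobd v) y ↔ ZeroAt (cobd (u + v)) y := by
  rw [← zeroAt_add_iff hu, add_comm (m + cobd v), add_add_add_comm, cochain_add_self, zero_add,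
    cobd_add]

theorem eq_of_zeroAt_cobd {u : X → ZMod 2} {s : Set X} (hs : IsPreconnected s)
    (h : ∀ y ∈ s, ZeroAt (cobd u) y) {a b : X} (ha : a ∈ s) (hb : b ∈ s) : u a = u b := by
  refine hs.constant (fun y hy => ContinuousAt.continuousWithinAt ?_) ha hb
  rw [ContinuousAt, nhds_discrete (ZMod 2), tendsto_pure]
  exact zeroAt_cobd_iff.1 (h y hy)

theorem add_eq_add_of_zeroAt_add_cobd {u v : X → ZMod 2} {s : Set X} (hs : IsPreconnected s)
    (hu : ∀ y ∈ s, ZeroAt (m + cobd u) y) (hv : ∀ y ∈ s, ZeroAt (m + cobd v) y) {a b : X}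
    (ha : a ∈ s) (hb : b ∈ s) : u a + v a = u b + v b :=
  eq_of_zeroAt_cobd hs (fun y hy => (zeroAt_add_cobd_iff (hu y hy)).1 (hv y hy)) ha hb

theorem zeroAt_add_cobd_zero_iff : ZeroAt (m + cobd 0) y ↔ ZeroAt m y := by
  rw [cobd_zero, add_zero]

theorem ZeroAt.closedAt (hm : ZeroAt m y) : ClosedAt m y := ⟨0, zeroAt_add_cobd_zero_iff.2 hm⟩

theorem closedAt_cobd (u : X → ZMod 2) (y : X) : ClosedAt (cobd u) y :=
  ⟨u, by rw [cochain_add_self]; exact zeroAt_zero y⟩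

theorem ClosedAt.add (hm : ClosedAt m y) (hn : ClosedAt n y) : ClosedAt (m + n) y := by
  obtain ⟨u, hu⟩ := hm
  obtain ⟨v, hv⟩ := hn
  refine ⟨u + v, ?_⟩
  rw [cobd_add, add_add_add_comm]
  exact hu.add hv

theorem closedAt_add_iff (hn : ClosedAt n y) : ClosedAt (m + n) y ↔ ClosedAt m y :=
  ⟨fun h => cochain_add_add_cancel m n ▸ h.add hn, fun h => h.add hn⟩

theorem closedAt_sum {ι : Type*} {s : Finset ι} {c : ι → Cochain X}
    (h : ∀ i ∈ s, ClosedAt (c i) y) : ClosedAt (∑ i ∈ s, c i) y :=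
  Finset.sum_induction _ (ClosedAt · y) (fun _ _ => ClosedAt.add) (zeroAt_zero y).closedAt h

protected theorem ClosedAt.pull {f : X → Y} {m : Cochain Y} (hf : ContinuousAt f x)
    (hm : ClosedAt m (f x)) : ClosedAt (pull f m) x := by
  obtain ⟨u, hu⟩ := hm
  exact ⟨u ∘ f, pull_add_cobd f m u ▸ hu.pull hf⟩

theorem zeroAt_add_cobd_extend {f : X → Y} (hf : IsOpenEmbedding f) {m : Cochain Y}
    {u : X → ZMod 2} (hu : ZeroAt (pull f m + cobd u) x) :
    ZeroAt (m + cobd (Function.extend f u 0)) (f x) := by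
  refine zeroAt_of_pull hf.isOpenMap ?_
  rwa [pull_add_cobd, Function.extend_comp hf.injective]

theorem closedAt_pull_iff {f : X → Y} (hf : IsOpenEmbedding f) {m : Cochain Y} :
    ClosedAt (pull f m) x ↔ ClosedAt m (f x) :=
  ⟨fun ⟨_, hu⟩ => ⟨_, zeroAt_add_cobd_extend hf hu⟩, ClosedAt.pull hf.continuous.continuousAt⟩

theorem resTriv_of_eventually_zeroAt (hm : ∀ᶠ y in 𝓝[≠] x, ZeroAt m y) : ResTriv m x :=
  ⟨0, hm.mono fun _ => zeroAt_add_cobd_zero_iff.2⟩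

theorem ClosedAt.resTriv (hm : ClosedAt m x) : ResTriv m x := by
  obtain ⟨u, hu⟩ := hm
  exact ⟨u, hu.eventually.filter_mono nhdsWithin_le_nhds⟩

theorem ResTriv.add (hm : ResTriv m x) (hn : ResTriv n x) : ResTriv (m + n) x := by
  obtain ⟨u, hu⟩ := hm
  obtain ⟨v, hv⟩ := hn
  refine ⟨u + v, ?_⟩
  filter_upwards [hu, hv] with z huz hvz
  rw [cobd_add, add_add_add_comm]
  exact huz.add hvz

theorem resTriv_add_iff (hn : ResTriv n x) : ResTriv (m + n) x ↔ ResTriv m x :=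
  ⟨fun h => cochain_add_add_cancel m n ▸ h.add hn, fun h => h.add hn⟩

theorem map_nhdsNE_of_isOpenEmbedding {f : X → Y} (hf : IsOpenEmbedding f) (x : X) :
    map f (𝓝[≠] x) = 𝓝[≠] f x := by
  rw [hf.isEmbedding.map_nhdsWithin_eq, image_compl_eq_range_sdiff_image hf.injective,
    image_singleton, sdiff_eq,
    nhdsWithin_inter_of_mem (mem_nhdsWithin_of_mem_nhds (hf.isOpen_range.mem_nhds ⟨x, rfl⟩))]

theorem resTriv_pull_iff {f : X → Y} (hf : IsOpenEmbedding f) {m : Cochain Y} :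
    ResTriv (pull f m) x ↔ ResTriv m (f x) := by
  simp only [ResTriv, ← map_nhdsNE_of_isOpenEmbedding hf, eventually_map]
  constructor
  · rintro ⟨u, hu⟩
    exact ⟨_, hu.mono fun _ => zeroAt_add_cobd_extend hf⟩
  · rintro ⟨u, hu⟩
    exact ⟨u ∘ f, hu.mono fun _ hy => pull_add_cobd f m u ▸ hy.pull hf.continuous.continuousAt⟩

theorem SuppIn.zeroAt {C : Set X} (h : SuppIn m C) (hC : IsClosed C) (hy : y ∉ C) : ZeroAt m y :=
  zeroAt_of_mem_nhds (hC.compl_mem_nhds hy) fun a ha b _ => by_contra fun hab => ha (h a b hab).1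

theorem zeroAt_restr_add {C : Set X} (hy : C ∈ 𝓝 y) : ZeroAt (restr C m + m) y :=
  zeroAt_of_mem_nhds hy fun a ha b hb => by
    rw [Pi.add_apply, Pi.add_apply, restr_of_mem ha hb, CharTwo.add_self_eq_zero]

theorem ZeroAt.restr (h : ZeroAt m y) (C : Set X) : ZeroAt (restr C m) y := by
  filter_upwards [h] with p hp
  exact by_contra fun hne => hne ((restr_of_mem (suppIn_restr C m _ _ hne).1
    (suppIn_restr C m _ _ hne).2).trans hp)

theorem ResTriv.exists_closedAt_add [RegularSpace X] (h : ResTriv m x)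
    {U : Set X} (hU : U ∈ 𝓝 x) :
    ∃ κ : Cochain X, SuppIn κ U ∧ (∀ y ≠ x, ZeroAt κ y) ∧ ClosedAt (m + κ) x := by
  obtain ⟨u, hu⟩ := h
  rw [eventually_nhdsWithin_iff] at hu
  obtain ⟨C, hC, hCc, hCU⟩ := exists_mem_nhds_isClosed_subset (inter_mem hu hU)
  refine ⟨AlexanderSpanier.restr C (m + cobd u),
    (suppIn_restr _ _).mono (hCU.trans inter_subset_right), fun y hy => ?_, u, ?_⟩
  · by_cases hyC : y ∈ C
    · exact ((hCU hyC).1 hy).restr C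
    · exact (suppIn_restr _ _).zeroAt hCc hyC
  · rw [add_right_comm, add_comm]
    exact zeroAt_restr_add hC

end AlexanderSpanier

/-! ### Principal coverings defined by cocycles -/

/-- A cocycle of locally constant functions with values in a discrete group, over an open cover of
`B`. It encodes a principal covering of `B`; as for `FiberBundleCore`, a member of the cover is
chosen around each point. -/
structure LocallyConstantCocycle (ι B G : Type*) [TopologicalSpace B] [Group G] where
  baseSet : ι → Set B
  isOpen_baseSet : ∀ i, IsOpen (baseSet i)
  indexAt : B → ι
  mem_baseSet_at : ∀ y, y ∈ baseSet (indexAt y)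
  transition : ι → ι → B → G
  eventually_transition_eq : ∀ i j, ∀ y ∈ baseSet i ∩ baseSet j,
    ∀ᶠ z in 𝓝 y, transition i j z = transition i j y
  transition_mul_transition : ∀ i j k, ∀ y ∈ baseSet i ∩ baseSet j ∩ baseSet k,
    transition i j y * transition j k y = transition i k y

namespace LocallyConstantCocycle

variable {ι B G : Type*} [TopologicalSpace B] [Group G] (c : LocallyConstantCocycle ι B G)

theorem transition_self {i : ι} {y : B} (hy : y ∈ c.baseSet i) : c.transition i i y = 1 :=
  mul_eq_left.1 (c.transition_mul_transition i i i y ⟨⟨hy, hy⟩, hy⟩)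

variable [TopologicalSpace G] [DiscreteTopology G]

/-- The fibre bundle core with fibre `G` on which the cocycle acts by right multiplication, so that
left multiplication is globally defined on the bundle. -/
def core : FiberBundleCore ι B G where
  baseSet := c.baseSet
  isOpen_baseSet := c.isOpen_baseSet
  indexAt := c.indexAt
  mem_baseSet_at := c.mem_baseSet_at
  coordChange i j y g := g * c.transition i j y
  coordChange_self i y hy g := by rw [c.transition_self hy, mul_one]
  continuousOn_coordChange i j := by
    rintro ⟨y, g⟩ ⟨hy, -⟩
    have hτ : ContinuousAt (c.transition i j) y := by
      rw [ContinuousAt, nhds_discrete G, tendsto_pure]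
      exact c.eventually_transition_eq i j y hy
    exact (continuousAt_snd.mul (hτ.comp continuousAt_fst)).continuousWithinAt
  coordChange_comp i j k y hy g := by rw [mul_assoc, c.transition_mul_transition i j k y hy]

/-- The principal covering space defined by the cocycle. -/
abbrev Cover : Type _ := c.core.TotalSpace

/-- The covering map. -/
abbrev proj : c.Cover → B := c.core.proj

/-- The second component of the trivialization over `c.baseSet i`. -/
def coord (i : ι) (x : c.Cover) : G := (c.core.localTriv i x).2

variable {c}

theorem isCoveringMap_proj : IsCoveringMap c.proj :=
  FiberBundle.isCoveringMap (F := G) (E := c.core.Fiber)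

theorem coord_eq_mul_transition {i j : ι} {x : c.Cover}
    (hx : c.proj x ∈ c.baseSet i ∩ c.baseSet j) :
    c.coord j x = c.coord i x * c.transition i j (c.proj x) :=
  (c.core.coordChange_comp (c.indexAt x.1) i j x.1 ⟨⟨c.mem_baseSet_at _, hx.1⟩, hx.2⟩ x.2).symm

theorem eventually_coord_eq {i : ι} {x : c.Cover} (hx : c.proj x ∈ c.baseSet i) :
    ∀ᶠ y in 𝓝 x, c.coord i y = c.coord i x := by
  have h : ContinuousAt (c.coord i) x :=
    continuous_snd.continuousAt.comp ((c.core.localTriv i).continuousAt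
      ((c.core.mem_localTriv_source i x).2 hx))
  rwa [ContinuousAt, nhds_discrete G, tendsto_pure] at h

theorem eq_of_coord_eq {i : ι} {x y : c.Cover} (hx : c.proj x ∈ c.baseSet i)
    (hxy : c.proj x = c.proj y) (h : c.coord i x = c.coord i y) : x = y :=
  (c.core.localTriv i).injOn ((c.core.mem_localTriv_source i x).2 hx)
    ((c.core.mem_localTriv_source i y).2 (show c.proj y ∈ c.baseSet i from hxy ▸ hx))
    (Prod.ext hxy h)

theorem exists_coord_eq {i : ι} {b : B} (hb : b ∈ c.baseSet i) (g : G) :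
    ∃ x : c.Cover, c.proj x = b ∧ c.coord i x = g := by
  have h := (c.core.localTriv i).apply_symm_apply (x := (b, g))
    ((c.core.mem_localTriv_target i (b, g)).2 hb)
  exact ⟨_, congrArg Prod.fst h, congrArg Prod.snd h⟩

theorem surjective_proj : Function.Surjective c.proj := fun b =>
  (exists_coord_eq (c.mem_baseSet_at b) 1).imp fun _ h => h.1

instance [T2Space B] : T2Space c.Cover where
  t2 x y hxy := by
    by_cases h : c.proj x = c.proj y
    · exact isCoveringMap_proj.isSeparatedMap x y h hxy
    · exact separated_by_continuous c.core.continuous_proj h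

instance : MulAction G c.Cover where
  smul g x := ⟨x.1, g * (show G from x.2)⟩
  one_smul x := congrArg (Bundle.TotalSpace.mk (E := c.core.Fiber) x.1) (one_mul (show G from x.2))
  mul_smul g h x :=
    congrArg (Bundle.TotalSpace.mk (E := c.core.Fiber) x.1) (mul_assoc g h (show G from x.2))

theorem coord_smul (i : ι) (g : G) (x : c.Cover) : c.coord i (g • x) = g * c.coord i x :=
  mul_assoc g (show G from x.2) (c.transition (c.indexAt x.1) i x.1)

theorem exists_smul_eq {x y : c.Cover} (h : c.proj x = c.proj y) : ∃ g : G, g • x = y := by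
  let i := c.indexAt (c.proj x)
  refine ⟨c.coord i y * (c.coord i x)⁻¹, eq_of_coord_eq (i := i) (c.mem_baseSet_at _) h ?_⟩
  rw [coord_smul, inv_mul_cancel_right]

instance : ContinuousConstSMul G c.Cover where
  continuous_const_smul g := continuous_iff_continuousAt.2 fun x => by
    rw [FiberBundle.continuousAt_totalSpace G (fun y : c.Cover => g • y)]
    refine ⟨c.core.continuous_proj.continuousAt, ?_⟩
    change ContinuousAt (fun y => c.coord (c.indexAt x.1) (g • y)) x
    rw [ContinuousAt, nhds_discrete G, tendsto_pure]
    filter_upwards [eventually_coord_eq (c.mem_baseSet_at (c.proj x))] with y hy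
    rw [coord_smul, coord_smul, hy]

theorem exists_nhds_finite_smul [T2Space B] (x x' : c.Cover) :
    ∃ V ∈ 𝓝 x, ∃ V' ∈ 𝓝 x', {g : G | ∃ y ∈ V, g • y ∈ V'}.Finite := by
  by_cases h : c.proj x = c.proj x'
  · let i := c.indexAt (c.proj x)
    have hi : c.proj x ∈ c.baseSet i := c.mem_baseSet_at _
    refine ⟨_, eventually_coord_eq hi, _, eventually_coord_eq (h ▸ hi),
      (finite_singleton (c.coord i x' * (c.coord i x)⁻¹)).subset ?_⟩
    rintro g ⟨y, hy : c.coord i y = _, hgy : c.coord i (g • y) = _⟩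
    rw [mem_singleton_iff, ← hgy, coord_smul, hy, mul_inv_cancel_right]
  · obtain ⟨V, V', hV, hV', hx, hx', hVV'⟩ := t2_separation h
    refine ⟨_, (hV.preimage c.core.continuous_proj).mem_nhds hx, _,
      (hV'.preimage c.core.continuous_proj).mem_nhds hx', ?_⟩
    convert finite_empty
    exact eq_empty_of_forall_notMem fun g ⟨y, hy, hgy⟩ => hVV'.notMem_of_mem_left hy hgy

theorem exists_trivialization [SimplyConnectedSpace B] [LocallyPathConnectedSpace B]
    (c : LocallyConstantCocycle ι B G) :
    ∃ f : ι → B → G, (∀ i, ∀ y ∈ c.baseSet i, ∀ᶠ z in 𝓝 y, f i z = f i y) ∧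
      ∀ i j, ∀ y ∈ c.baseSet i ∩ c.baseSet j, f j y = f i y * c.transition i j y := by
  obtain ⟨x₀⟩ : Nonempty c.Cover := Nonempty.map (c.surjective_proj ·|>.choose) inferInstance
  obtain ⟨σ, ⟨-, hσ⟩, -⟩ := c.isCoveringMap_proj.existsUnique_continuousMap_lifts
    (ContinuousMap.id B) (c.proj x₀) x₀ rfl
  replace hσ : ∀ y, c.proj (σ y) = y := congrFun hσ
  refine ⟨fun i y => c.coord i (σ y), fun i y hy => ?_, fun i j y hy => ?_⟩
  · exact σ.continuous.continuousAt.eventually (eventually_coord_eq ((hσ y).symm ▸ hy))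
  · change c.coord j (σ y) = c.coord i (σ y) * c.transition i j y
    rw [coord_eq_mul_transition ((hσ y).symm ▸ hy), hσ]

end LocallyConstantCocycle

theorem properlyDiscontinuousSMul_of_exists_nhds {G E : Type*} [TopologicalSpace E] [SMul G E]
    (h : ∀ x x' : E, ∃ V ∈ 𝓝 x, ∃ V' ∈ 𝓝 x', {g : G | ∃ y ∈ V, g • y ∈ V'}.Finite) :
    ProperlyDiscontinuousSMul G E where
  finite_disjoint_inter_image {K L} hK hL := by
    suffices {g : G | ∃ q ∈ K ×ˢ L, g • q.1 = q.2}.Finite from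
      this.subset fun g ⟨_, ⟨x, hx, hgx⟩, hgx'⟩ => ⟨(x, _), ⟨hx, hgx'⟩, hgx⟩
    refine (hK.prod hL).induction_on
      (p := fun A => {g : G | ∃ q ∈ A, g • q.1 = q.2}.Finite) (by simp)
      (fun A A' hA hA' => hA'.subset fun g ⟨q, hq, hg⟩ => ⟨q, hA hq, hg⟩)
      (fun A A' hA hA' => (hA.union hA').subset ?_) ?_
    · rintro g ⟨q, hq | hq, hg⟩
      exacts [Or.inl ⟨q, hq, hg⟩, Or.inr ⟨q, hq, hg⟩]
    · rintro ⟨x, x'⟩ -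
      obtain ⟨V, hV, V', hV', hVV'⟩ := h x x'
      exact ⟨_, mem_nhdsWithin_of_mem_nhds (prod_mem_nhds hV hV'),
        hVV'.subset fun g ⟨q, hq, hg⟩ => ⟨q.1, hq.1, hg ▸ hq.2⟩⟩

theorem exists_isCompact_image_eq_univ {E B : Type*} [TopologicalSpace E]
    [TopologicalSpace B] [WeaklyLocallyCompactSpace E] [CompactSpace B] {p : E → B}
    (hp : IsOpenQuotientMap p) : ∃ C, IsCompact C ∧ p '' C = univ := by
  choose K hK hKx using fun x : E => exists_compact_mem_nhds x
  obtain ⟨t, ht⟩ := isCompact_univ.elim_finite_subcover (fun x => p '' interior (K x))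
    (fun x => hp.isOpenMap _ isOpen_interior) fun b _ => by
      obtain ⟨x, rfl⟩ := hp.surjective b
      exact mem_iUnion.2 ⟨x, mem_image_of_mem p (mem_interior_iff_mem_nhds.2 (hKx x))⟩
  refine ⟨⋃ x ∈ t, K x, t.isCompact_biUnion fun x _ => hK x, ?_⟩
  rw [image_iUnion₂]
  exact eq_univ_of_univ_subset (ht.trans (iUnion₂_mono fun x _ => image_mono interior_subset))

namespace AlexanderSpanier

variable {X Y : Type*} [TopologicalSpace X] [TopologicalSpace Y]

theorem exists_primitive [SimplyConnectedSpace X] [LocallyPathConnectedSpace X] {m : Cochain X}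
    (hm : ∀ y, ClosedAt m y) : ∃ v, ∀ y, ZeroAt (m + cobd v) y := by
  choose u hu using hm
  let c : LocallyConstantCocycle X X (Multiplicative (ZMod 2)) :=
    { baseSet := fun y => {z | ZeroAt (m + cobd (u y)) z}
      isOpen_baseSet := fun y => isOpen_setOf_zeroAt _
      indexAt := id
      mem_baseSet_at := hu
      transition := fun i j y => Multiplicative.ofAdd (u i y + u j y)
      eventually_transition_eq := fun i j y hy => by
        filter_upwards [zeroAt_cobd_iff.1 ((zeroAt_add_cobd_iff hy.1).1 hy.2)] with z hz
        exact congrArg Multiplicative.ofAdd hz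
      transition_mul_transition := fun i j k y _ => by
        rw [← ofAdd_add]
        exact congrArg Multiplicative.ofAdd (by grind) }
  obtain ⟨f, hf, hfc⟩ := c.exists_trivialization
  let v : X → ZMod 2 := fun y => (f y y).toAdd + u y y
  have hv (i y : X) (hy : y ∈ c.baseSet i) : u i y + v y = (f i y).toAdd := by
    rw [hfc y i y ⟨hu y, hy⟩, toAdd_mul, toAdd_ofAdd]
    ring
  refine ⟨v, fun y => (zeroAt_add_cobd_iff (hu y)).2 (zeroAt_cobd_iff.2 ?_)⟩
  filter_upwards [hf y y (hu y), (c.isOpen_baseSet y).mem_nhds (hu y)] with z hz hzy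
  rw [Pi.add_apply, Pi.add_apply, hv y z hzy, hv y y (hu y), hz]

/-! ### Cochains on the plane -/

theorem exists_log_primitive {m : Cochain ℂ} (hm : ∀ z ≠ 0, ClosedAt m z) :
    ∃ (v : ℂ → ZMod 2) (c : ZMod 2), (∀ z, ZeroAt (pull Complex.exp m + cobd v) z) ∧
      ∀ z, v (z + 2 * Real.pi * Complex.I) = v z + c := by
  obtain ⟨v, hv⟩ := exists_primitive (m := pull Complex.exp m) fun z =>
    ClosedAt.pull Complex.continuous_exp.continuousAt (hm _ (Complex.exp_ne_zero z))
  let τ : ℂ → ℂ := fun z => z + 2 * Real.pi * Complex.I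
  have hτ : Continuous τ := by fun_prop
  have hexp : pull τ (pull Complex.exp m) = pull Complex.exp m := by
    ext a b
    simp only [pull, τ, Complex.exp_periodic a, Complex.exp_periodic b]
  have hvτ (z : ℂ) : ZeroAt (pull Complex.exp m + cobd (v ∘ τ)) z := by
    simpa only [pull_add_cobd, hexp] using ZeroAt.pull hτ.continuousAt (hv (τ z))
  refine ⟨v, v 0 + v (τ 0), hv, fun z => ?_⟩
  have h : v z + v (τ z) = v 0 + v (τ 0) := add_eq_add_of_zeroAt_add_cobd isPreconnected_univ
    (fun y _ => hv y) (fun y _ => hvτ y) (mem_univ z) (mem_univ 0)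
  rw [← h, CharTwo.add_cancel_left]

theorem resTriv_of_periodic {m : Cochain ℂ} {v : ℂ → ZMod 2}
    (hv : ∀ z, ZeroAt (pull Complex.exp m + cobd v) z)
    (hp : Function.Periodic v (2 * Real.pi * Complex.I)) : ResTriv m 0 := by
  have hlog : (v ∘ Complex.log) ∘ Complex.exp = v := by
    ext w
    obtain ⟨n, hn⟩ := Complex.exp_eq_exp_iff_exists_int.1
      (Complex.exp_log (Complex.exp_ne_zero w))
    rw [Function.comp_apply, Function.comp_apply, hn]
    exact hp.int_mul n w
  refine ⟨v ∘ Complex.log, eventually_nhdsWithin_of_forall fun z hz => ?_⟩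
  rw [← Complex.exp_log hz]
  refine zeroAt_of_pull Complex.isOpenMap_exp ?_
  rw [pull_add_cobd, hlog]
  exact hv _

theorem resTriv_add_of_not_resTriv {m n : Cochain ℂ} (hm : ∀ z ≠ 0, ClosedAt m z)
    (hn : ∀ z ≠ 0, ClosedAt n z) (hm' : ¬ ResTriv m 0) (hn' : ¬ ResTriv n 0) :
    ResTriv (m + n) 0 := by
  obtain ⟨v, c, hv, hvc⟩ := exists_log_primitive hm
  obtain ⟨w, d, hw, hwd⟩ := exists_log_primitive hn
  have hc : c ≠ 0 := by
    rintro rfl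
    exact hm' (resTriv_of_periodic hv fun z => (hvc z).trans (add_zero _))
  have hd : d ≠ 0 := by
    rintro rfl
    exact hn' (resTriv_of_periodic hw fun z => (hwd z).trans (add_zero _))
  have hcd : c + d = 0 :=
    (by decide : ∀ c d : ZMod 2, c ≠ 0 → d ≠ 0 → c + d = 0) c d hc hd
  refine resTriv_of_periodic (v := v + w) (fun z => ?_) fun z => ?_
  · rw [cobd_add]
    exact add_add_add_comm (pull Complex.exp m) (cobd v) _ _ ▸ (hv z).add (hw z)
  · rw [Pi.add_apply, hvc, hwd, add_add_add_comm, hcd, add_zero, Pi.add_apply]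

theorem resTriv_zero_of_isCompact {m : Cochain ℂ} (hm : ∀ z ≠ 0, ClosedAt m z) {K : Set ℂ}
    (hK : IsCompact K) (h : ∀ z ∉ K, ZeroAt m z) : ResTriv m 0 := by
  obtain ⟨v, c, hv, hvc⟩ := exists_log_primitive hm
  obtain ⟨r, hr, hKr⟩ := hK.isBounded.subset_ball_lt 0 0
  have hz (z : ℂ) (hz : Real.log r < z.re) : ZeroAt (pull Complex.exp m) z := by
    refine ZeroAt.pull Complex.continuous_exp.continuousAt (h _ fun hzK => ?_)
    have hlt := mem_ball_zero_iff.1 (hKr hzK)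
    rw [Complex.norm_exp, ← Real.lt_log_iff_exp_lt hr] at hlt
    exact hlt.not_gt hz
  let x : ℂ := (Real.log r + 1 : ℝ)
  have hx : v (x + 2 * Real.pi * Complex.I) = v x :=
    eq_of_zeroAt_cobd (convex_halfSpace_re_gt (Real.log r)).isPreconnected
      (fun z hzr => by simpa only [add_comm, zeroAt_add_iff (hz z hzr)] using hv z)
      (by simp [x]) (by simp [x])
  rw [hvc, add_eq_left] at hx
  exact resTriv_of_periodic hv fun z => by rw [hvc, hx, add_zero]

end AlexanderSpanier

/-! ### Residues -/

/-- The class of spaces which are locally homeomorphic to the plane. Charts are normalised to be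
defined on all of `ℂ` and centred at `0`. -/
class LocallyPlane (X : Type*) [TopologicalSpace X] : Prop where
  exists_isOpenEmbedding (x : X) : ∃ f : ℂ → X, IsOpenEmbedding f ∧ f 0 = x

namespace LocallyPlane

instance : LocallyPlane ℂ where
  exists_isOpenEmbedding x :=
    ⟨Homeomorph.addRight x, (Homeomorph.addRight x).isOpenEmbedding, zero_add x⟩

theorem exists_range_subset {X : Type*} [TopologicalSpace X] [LocallyPlane X] {x : X} {U : Set X}
    (hU : U ∈ 𝓝 x) : ∃ f : ℂ → X, IsOpenEmbedding f ∧ f 0 = x ∧ range f ⊆ U := by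
  obtain ⟨f, hf, rfl⟩ := exists_isOpenEmbedding x
  obtain ⟨r, hr, hrU⟩ := Metric.mem_nhds_iff.1 (hf.continuous.continuousAt hU)
  let g := OpenPartialHomeomorph.univBall (0 : ℂ) r
  have hg : IsOpenEmbedding g :=
    g.isOpenEmbedding (OpenPartialHomeomorph.univBall_source 0 r)
  refine ⟨f ∘ g, hf.comp hg, congrArg f (OpenPartialHomeomorph.univBall_apply_zero 0 r), ?_⟩
  rintro _ ⟨z, rfl⟩
  refine hrU ?_
  rw [← OpenPartialHomeomorph.univBall_target 0 hr]
  exact g.map_source (by simp only [g, OpenPartialHomeomorph.univBall_source, mem_univ])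

instance {X : Type*} [TopologicalSpace X] [LocallyPlane X] : WeaklyLocallyCompactSpace X where
  exists_compact_mem_nhds x := by
    obtain ⟨f, hf, rfl⟩ := exists_isOpenEmbedding x
    exact ⟨f '' Metric.closedBall 0 1, (isCompact_closedBall 0 1).image hf.continuous,
      hf.isOpenMap.image_mem_nhds (Metric.closedBall_mem_nhds 0 one_pos)⟩

instance {X : Type*} [TopologicalSpace X] [LocallyPlane X] : LocallyPathConnectedSpace X := by
  choose f hf hfx using exists_isOpenEmbedding (X := X)
  let chart (x : X) : OpenPartialHomeomorph X ℂ := ((hf x).toOpenPartialHomeomorph (f x)).symm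
  have hchart (x : X) : x ∈ (chart x).source := by
    simp only [chart, OpenPartialHomeomorph.symm_source,
      IsOpenEmbedding.toOpenPartialHomeomorph_target]
    exact ⟨0, hfx x⟩
  let _ : ChartedSpace ℂ X :=
    { atlas := range chart
      chartAt := chart
      mem_chart_source := hchart
      chart_mem_atlas := mem_range_self }
  exact ChartedSpace.locallyPathConnectedSpace ℂ X

end LocallyPlane

namespace AlexanderSpanier

variable {X Y : Type*} [TopologicalSpace X] [TopologicalSpace Y]

open Classical in
/-- The residue at `x` of a cochain closed on a punctured neighbourhood of `x`. -/
noncomputable def res (m : Cochain X) (x : X) : ZMod 2 := if ResTriv m x then 0 else 1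

variable {m n : Cochain X} {x : X}

theorem res_eq_zero_iff : res m x = 0 ↔ ResTriv m x := by
  unfold res
  split_ifs with h <;> simp [h]

theorem res_eq_one_iff : res m x = 1 ↔ ¬ ResTriv m x := by
  unfold res
  split_ifs with h <;> simp [h]

theorem res_congr {n : Cochain Y} {y : Y} (h : ResTriv m x ↔ ResTriv n y) :
    res m x = res n y := by
  classical
  exact if_congr h rfl rfl

theorem ClosedAt.res_eq_zero (h : ClosedAt m x) : res m x = 0 := res_eq_zero_iff.2 h.resTriv

theorem eventually_nhdsNE_of_finite [T1Space X] {P : X → Prop} {F : Set X} (hF : F.Finite)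
    (h : ∀ y ∉ F, P y) (x : X) : ∀ᶠ y in 𝓝[≠] x, P y := by
  rw [eventually_nhdsWithin_iff]
  filter_upwards [(hF.sdiff (t := {x})).isClosed.compl_mem_nhds fun hx => hx.2 rfl] with y hy hyx
  exact h y fun hyF => hy ⟨hyF, hyx⟩

theorem res_add [LocallyPlane X] (hm : ∀ᶠ y in 𝓝[≠] x, ClosedAt m y)
    (hn : ∀ᶠ y in 𝓝[≠] x, ClosedAt n y) : res (m + n) x = res m x + res n x := by
  by_cases hmx : ResTriv m x
  · rw [res_eq_zero_iff.2 hmx, zero_add, add_comm]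
    exact res_congr (resTriv_add_iff hmx)
  by_cases hnx : ResTriv n x
  · rw [res_eq_zero_iff.2 hnx, add_zero]
    exact res_congr (resTriv_add_iff hnx)
  obtain ⟨f, hf, rfl, hfU⟩ := LocallyPlane.exists_range_subset
    (eventually_nhdsWithin_iff.1 (hm.and hn))
  have hcl (z : ℂ) (hz : z ≠ 0) : ClosedAt m (f z) ∧ ClosedAt n (f z) :=
    hfU ⟨z, rfl⟩ (hf.injective.ne hz)
  rw [res_eq_one_iff.2 hmx, res_eq_one_iff.2 hnx, CharTwo.add_self_eq_zero, res_eq_zero_iff,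
    ← resTriv_pull_iff hf]
  rw [← resTriv_pull_iff hf] at hmx hnx
  exact resTriv_add_of_not_resTriv (fun z hz => (closedAt_pull_iff hf).2 (hcl z hz).1)
    (fun z hz => (closedAt_pull_iff hf).2 (hcl z hz).2) hmx hnx

theorem res_sum [LocallyPlane X] {ι : Type*} {s : Finset ι} {c : ι → Cochain X}
    (h : ∀ i ∈ s, ∀ᶠ y in 𝓝[≠] x, ClosedAt (c i) y) :
    res (∑ i ∈ s, c i) x = ∑ i ∈ s, res (c i) x := by
  classical
  induction s using Finset.induction_on with
  | empty => exact (zeroAt_zero x).closedAt.res_eq_zero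
  | insert i s hi ih =>
    rw [Finset.forall_mem_insert] at h
    rw [Finset.sum_insert hi, Finset.sum_insert hi, ← ih h.2]
    exact res_add h.1 (((eventually_all_finset s).2 h.2).mono fun y => closedAt_sum)

/-! ### Dipoles and the residue theorem -/

/-- A compactly supported cochain with two poles `p` and `q`. The support condition is the one on
pairs of points, so that translates of a dipole form a locally finite family. -/
structure IsDipole (d : Cochain X) (p q : X) : Prop where
  exists_isCompact : ∃ C, IsCompact C ∧ SuppIn d C
  closedAt : ∀ z ∉ ({p, q} : Set X), ClosedAt d z
  not_resTriv_left : ¬ ResTriv d p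
  not_resTriv_right : ¬ ResTriv d q

theorem IsDipole.symm {d : Cochain X} {p q : X} (h : IsDipole d p q) : IsDipole d q p :=
  ⟨h.exists_isCompact, fun z hz => h.closedAt z (pair_comm p q ▸ hz), h.not_resTriv_right,
    h.not_resTriv_left⟩

theorem IsDipole.eventually_closedAt [T1Space X] {d : Cochain X} {p q : X} (h : IsDipole d p q)
    (x : X) : ∀ᶠ z in 𝓝[≠] x, ClosedAt d z :=
  eventually_nhdsNE_of_finite (toFinite _) h.closedAt x

theorem IsDipole.exists_of_isOpenEmbedding [T2Space Y] {f : X → Y} (hf : IsOpenEmbedding f)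
    {d : Cochain X} {p q : X} (h : IsDipole d p q) : ∃ d', IsDipole d' (f p) (f q) := by
  have : Nonempty X := ⟨p⟩
  obtain ⟨C, hC, hdC⟩ := h.exists_isCompact
  let d' := restr (range f) (pull (Function.invFun f) d)
  have hd' : pull f d' = d := by
    ext a b
    have hinv := Function.leftInverse_invFun hf.injective
    simp only [pull, d', restr_of_mem (mem_range_self (f := f) a) (mem_range_self b), hinv a,
      hinv b]
  have hd'C : SuppIn d' (f '' C) := by
    intro a b hab
    obtain ⟨⟨a, rfl⟩, ⟨b, rfl⟩⟩ := suppIn_restr _ _ a b hab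
    have hab' : d a b ≠ 0 := hd' ▸ hab
    exact ⟨mem_image_of_mem f (hdC a b hab').1, mem_image_of_mem f (hdC a b hab').2⟩
  refine ⟨d', ⟨_, hC.image hf.continuous, hd'C⟩, fun y hy => ?_, ?_, ?_⟩
  · by_cases hyf : y ∈ range f
    · obtain ⟨x, rfl⟩ := hyf
      rw [← closedAt_pull_iff hf, hd']
      exact h.closedAt x fun hx => hy (hx.imp (congrArg f) (congrArg f))
    · exact (hd'C.zeroAt (hC.image hf.continuous).isClosed
        fun hyC => hyf (image_subset_range _ _ hyC)).closedAt
  · rw [← resTriv_pull_iff hf, hd']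
    exact h.not_resTriv_left
  · rw [← resTriv_pull_iff hf, hd']
    exact h.not_resTriv_right

/-- The indicator of the closed upper half plane. -/
noncomputable def upper (z : ℂ) : ZMod 2 := if 0 ≤ z.im then 1 else 0

/-- The intersection number with the segment from `-1` to `0`, the basic cochain with poles at the
two end points of this segment. -/
noncomputable def modelDipole : Cochain ℂ := restr (Ioo (-1) 0 ×ℂ Ioo (-1) 1) (cobd upper)

theorem zeroAt_modelDipole_of_im_ne_zero {z : ℂ} (hz : z.im ≠ 0) : ZeroAt modelDipole z := by
  refine (zeroAt_cobd_iff.2 ?_).restr _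
  rcases lt_or_gt_of_ne hz with h | h
  · filter_upwards [Complex.continuous_im.continuousAt.eventually_lt_const h] with w hw
    rw [upper, upper, if_neg h.not_ge, if_neg hw.not_ge]
  · filter_upwards [Complex.continuous_im.continuousAt.eventually_const_lt h] with w hw
    rw [upper, upper, if_pos h.le, if_pos hw.le]

theorem suppIn_modelDipole : SuppIn modelDipole (Icc (-1) 0 ×ℂ Icc (-1) 1) :=
  (suppIn_restr _ _).mono fun _ hz => ⟨Ioo_subset_Icc_self hz.1, Ioo_subset_Icc_self hz.2⟩

theorem isCompact_modelSupport : IsCompact (Icc (-1 : ℝ) 0 ×ℂ Icc (-1 : ℝ) 1) :=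
  isCompact_Icc.reProdIm isCompact_Icc

theorem zeroAt_modelDipole_of_re_notMem {z : ℂ} (hz : z.re ∉ Icc (-1) 0) : ZeroAt modelDipole z :=
  suppIn_modelDipole.zeroAt isCompact_modelSupport.isClosed fun h => hz h.1

theorem zeroAt_modelDipole_add {z : ℂ} (hre : z.re ∈ Ioo (-1) 0) (him : z.im ∈ Ioo (-1) 1) :
    ZeroAt (modelDipole + cobd upper) z :=
  zeroAt_restr_add ((isOpen_Ioo.reProdIm isOpen_Ioo).mem_nhds ⟨hre, him⟩)

theorem closedAt_modelDipole {z : ℂ} (hz : z ∉ ({0, -1} : Set ℂ)) : ClosedAt modelDipole z := by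
  by_cases him : z.im = 0
  · by_cases hre : z.re ∈ Icc (-1) 0
    · have hre0 : z.re ≠ 0 := fun h => hz (Or.inl (Complex.ext h him))
      have hre1 : z.re ≠ -1 := fun h => hz (Or.inr (Complex.ext h (by simpa using him)))
      exact ⟨upper, zeroAt_modelDipole_add ⟨hre.1.lt_of_ne' hre1, hre.2.lt_of_ne hre0⟩
        (by simp [him])⟩
    · exact (zeroAt_modelDipole_of_re_notMem hre).closedAt
  · exact (zeroAt_modelDipole_of_im_ne_zero him).closedAt

theorem isPreconnected_reProdIm {I J : Set ℝ} (hI : Convex ℝ I) (hJ : Convex ℝ J) :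
    IsPreconnected (I ×ℂ J) :=
  ((hI.linear_preimage Complex.reLm).inter (hJ.linear_preimage Complex.imLm)).isPreconnected

theorem add_eq_add_of_subset_square {m : Cochain ℂ} {r : ℝ} {u v : ℂ → ZMod 2}
    (hu : ∀ z ∈ Ioo (-r) r ×ℂ Ioo (-r) r, z ≠ 0 → ZeroAt (m + cobd u) z) {I J : Set ℝ}
    (hI : Convex ℝ I) (hJ : Convex ℝ J) (hIr : I ⊆ Ioo (-r) r) (hJr : J ⊆ Ioo (-r) r)
    (h0 : 0 ∉ I ∨ 0 ∉ J) (hv : ∀ z ∈ I ×ℂ J, ZeroAt (m + cobd v) z) {a b : ℂ} (ha : a ∈ I ×ℂ J)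
    (hb : b ∈ I ×ℂ J) : u a + v a = u b + v b := by
  refine add_eq_add_of_zeroAt_add_cobd (isPreconnected_reProdIm hI hJ) (fun z hz => ?_) hv ha hb
  refine hu z ⟨hIr hz.1, hJr hz.2⟩ ?_
  rintro rfl
  exact h0.elim (· hz.1) (· hz.2)

-- A primitive would be constant on each of the four halves of the square, up to the jump of `upper`
-- on the left half, and going around the corners gives a contradiction.
theorem not_forall_zeroAt_modelDipole_add {r : ℝ} (hr : 0 < r) (hr1 : r ≤ 1) (u : ℂ → ZMod 2) :
    ¬ ∀ z ∈ Ioo (-r) r ×ℂ Ioo (-r) r, z ≠ 0 → ZeroAt (modelDipole + cobd u) z := by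
  intro hu
  have hpos : Ioo 0 r ⊆ Ioo (-r) r := Ioo_subset_Ioo_left (by linarith)
  have hneg : Ioo (-r) 0 ⊆ Ioo (-r) r := Ioo_subset_Ioo_right hr.le
  have hp : r / 2 ∈ Ioo 0 r := ⟨by linarith, by linarith⟩
  have hn : -(r / 2) ∈ Ioo (-r) 0 := ⟨by linarith, by linarith⟩
  have top : u ⟨-(r / 2), r / 2⟩ + 0 = u ⟨r / 2, r / 2⟩ + 0 :=
    add_eq_add_of_subset_square hu (v := 0) (convex_Ioo _ _) (convex_Ioo _ _) subset_rfl hpos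
      (by simp)
      (fun z hz => zeroAt_add_cobd_zero_iff.2 (zeroAt_modelDipole_of_im_ne_zero hz.2.1.ne'))
      ⟨hneg hn, hp⟩ ⟨hpos hp, hp⟩
  have bottom : u ⟨-(r / 2), -(r / 2)⟩ + 0 = u ⟨r / 2, -(r / 2)⟩ + 0 :=
    add_eq_add_of_subset_square hu (v := 0) (convex_Ioo _ _) (convex_Ioo _ _) subset_rfl hneg
      (by simp)
      (fun z hz => zeroAt_add_cobd_zero_iff.2 (zeroAt_modelDipole_of_im_ne_zero hz.2.2.ne))
      ⟨hneg hn, hn⟩ ⟨hpos hp, hn⟩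
  have right : u ⟨r / 2, r / 2⟩ + 0 = u ⟨r / 2, -(r / 2)⟩ + 0 :=
    add_eq_add_of_subset_square hu (v := 0) (convex_Ioo _ _) (convex_Ioo _ _) hpos subset_rfl
      (by simp)
      (fun z hz => zeroAt_add_cobd_zero_iff.2
        (zeroAt_modelDipole_of_re_notMem fun h => hz.1.1.not_ge h.2))
      ⟨hp, hpos hp⟩ ⟨hp, hneg hn⟩
  have left : u ⟨-(r / 2), r / 2⟩ + 1 = u ⟨-(r / 2), -(r / 2)⟩ + 0 := by
    have h := add_eq_add_of_subset_square hu (convex_Ioo _ _) (convex_Ioo _ _) hneg subset_rfl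
      (by simp) (fun z hz => zeroAt_modelDipole_add ⟨by linarith [hz.1.1], hz.1.2⟩
        ⟨by linarith [hz.2.1], by linarith [hz.2.2]⟩)
      (a := ⟨-(r / 2), r / 2⟩) (b := ⟨-(r / 2), -(r / 2)⟩) ⟨hn, hpos hp⟩ ⟨hn, hneg hn⟩
    rwa [upper, if_pos hp.1.le, upper, if_neg hn.2.not_ge] at h
  rw [bottom, ← right, ← top, add_right_inj] at left
  exact one_ne_zero left

theorem not_resTriv_modelDipole_zero : ¬ ResTriv modelDipole 0 := by
  rintro ⟨u, hu⟩
  rw [eventually_nhdsWithin_iff, Metric.eventually_nhds_iff_ball] at hu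
  obtain ⟨r, hr, hu⟩ := hu
  refine not_forall_zeroAt_modelDipole_add (r := min (r / 2) 1) (by positivity)
    (min_le_right _ _) u fun z hz => hu z ?_
  rw [mem_ball_zero_iff]
  linarith [Complex.norm_le_abs_re_add_abs_im z, abs_lt.2 hz.1, abs_lt.2 hz.2,
    min_le_left (r / 2) 1]

theorem not_resTriv_modelDipole_neg_one : ¬ ResTriv modelDipole (-1) := by
  intro h
  obtain ⟨κ, hκ, hκ0, hκc⟩ := h.exists_closedAt_add (Metric.closedBall_mem_nhds (-1) one_pos)
  have hκ0' : ZeroAt κ 0 := hκ0 0 (by simp)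
  refine not_resTriv_modelDipole_zero ((resTriv_add_iff hκ0'.closedAt.resTriv).1
    (resTriv_zero_of_isCompact (fun z hz => ?_)
      (isCompact_modelSupport.union (isCompact_closedBall (-1) 1)) fun z hz => ?_))
  · by_cases hz1 : z = -1
    · rwa [hz1]
    · exact (closedAt_modelDipole (by simp [hz, hz1])).add (hκ0 z hz1).closedAt
  · rw [mem_union, not_or] at hz
    exact (suppIn_modelDipole.zeroAt isCompact_modelSupport.isClosed hz.1).add
      (hκ.zeroAt Metric.isClosed_closedBall hz.2)

theorem isDipole_modelDipole : IsDipole modelDipole 0 (-1) :=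
  ⟨⟨_, isCompact_modelSupport, suppIn_modelDipole⟩, fun _ => closedAt_modelDipole,
    not_resTriv_modelDipole_zero, not_resTriv_modelDipole_neg_one⟩

theorem exists_isDipole_complex {p q : ℂ} (hpq : p ≠ q) : ∃ d, IsDipole d p q := by
  let f := (Homeomorph.mulRight₀ (p - q) (sub_ne_zero.2 hpq)).trans (Homeomorph.addRight p)
  have h := isDipole_modelDipole.exists_of_isOpenEmbedding f.isOpenEmbedding
  rwa [show f 0 = p by simp [f], show f (-1) = q by simp [f]] at h

theorem exists_pole_transfer {m : Cochain ℂ} {p q : ℂ} (hpq : p ≠ q)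
    (hm : ∀ᶠ z in 𝓝[≠] p, ClosedAt m z) :
    ∃ (d : Cochain ℂ) (C : Set ℂ), IsCompact C ∧ SuppIn d C ∧
      (∀ z ∉ ({p, q} : Set ℂ), ClosedAt d z) ∧ ClosedAt (m + d) p ∧ res d q = res m p := by
  suffices ∃ (d : Cochain ℂ) (C : Set ℂ), IsCompact C ∧ SuppIn d C ∧
      (∀ z ∉ ({p, q} : Set ℂ), ClosedAt d z) ∧ ResTriv (m + d) p ∧ res d q = res m p by
    obtain ⟨d, C, hC, hdC, hd, hdp, hdq⟩ := this
    obtain ⟨κ, hκ, hκ0, hκp⟩ := hdp.exists_closedAt_add (Metric.closedBall_mem_nhds p one_pos)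
    refine ⟨d + κ, C ∪ Metric.closedBall p 1, hC.union (isCompact_closedBall p 1),
      (hdC.mono subset_union_left).add (hκ.mono subset_union_right),
      fun z hz => (hd z hz).add (hκ0 z fun h => hz (Or.inl h)).closedAt,
      add_assoc m d κ ▸ hκp, ?_⟩
    rw [← hdq]
    exact res_congr (resTriv_add_iff (hκ0 q hpq.symm).closedAt.resTriv)
  by_cases h : ResTriv m p
  · refine ⟨0, ∅, isCompact_empty, fun a b hab => (hab rfl).elim,
      fun z _ => (zeroAt_zero z).closedAt, (add_zero m).symm ▸ h, ?_⟩
    rw [res_eq_zero_iff.2 h, (zeroAt_zero q).closedAt.res_eq_zero]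
  · obtain ⟨d, hd⟩ := exists_isDipole_complex hpq
    obtain ⟨C, hC, hdC⟩ := hd.exists_isCompact
    refine ⟨d, C, hC, hdC, hd.closedAt, ?_,
      (res_eq_one_iff.2 hd.not_resTriv_right).trans (res_eq_one_iff.2 h).symm⟩
    rw [← res_eq_zero_iff, res_add hm (hd.eventually_closedAt p), res_eq_one_iff.2 h,
      res_eq_one_iff.2 hd.not_resTriv_left, CharTwo.add_self_eq_zero]

-- Dipoles transfer all poles to `0`, where the residue of a compactly supported cochain vanishes.
theorem sum_res_complex_eq_zero {F : Finset ℂ} {m : Cochain ℂ} (hm : ∀ z ∉ F, ClosedAt m z)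
    {K : Set ℂ} (hK : IsCompact K) (h : ∀ z ∉ K, ZeroAt m z) : ∑ x ∈ F, res m x = 0 := by
  have hm' (x : ℂ) : ∀ᶠ z in 𝓝[≠] x, ClosedAt m z :=
    eventually_nhdsNE_of_finite F.finite_toSet hm x
  choose! d C hC hdC hd hdp hdq using fun p (hp : p ≠ 0) => exists_pole_transfer hp (hm' p)
  let F' := F.erase 0
  have hF' {x : ℂ} (hx : x ∈ F') : x ≠ 0 := Finset.ne_of_mem_erase hx
  have hd' {x z : ℂ} (hx : x ∈ F') (hzx : z ≠ x) (hz : z ≠ 0) : ClosedAt (d x) z :=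
    hd x (hF' hx) z (by simp [hzx, hz])
  have hcl (z : ℂ) (hz : z ≠ 0) : ClosedAt (m + ∑ x ∈ F', d x) z := by
    by_cases hzF : z ∈ F'
    · rw [← Finset.add_sum_erase F' d hzF, ← add_assoc]
      exact (hdp z hz).add (closedAt_sum fun x hx =>
        hd' (Finset.mem_of_mem_erase hx) (Finset.ne_of_mem_erase hx).symm hz)
    · exact (hm z fun h => hzF (Finset.mem_erase.2 ⟨hz, h⟩)).add (closedAt_sum fun x hx =>
        hd' hx (ne_of_mem_of_not_mem hx hzF).symm hz)
  have hres : ResTriv (m + ∑ x ∈ F', d x) 0 := by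
    refine resTriv_zero_of_isCompact hcl (hK.union
      (F'.isCompact_biUnion fun x hx => hC x (hF' hx))) fun z hz => ?_
    simp only [mem_union, mem_iUnion, not_or, not_exists] at hz
    exact (h z hz.1).add (zeroAt_sum fun x hx =>
      (hdC x (hF' hx)).zeroAt (hC x (hF' hx)).isClosed (hz.2 x hx))
  have hd0 (x : ℂ) (hx : x ∈ F') : ∀ᶠ z in 𝓝[≠] 0, ClosedAt (d x) z :=
    eventually_nhdsNE_of_finite (toFinite _) (hd x (hF' hx)) 0
  rw [← res_eq_zero_iff, res_add (hm' 0) (((eventually_all_finset F').2 hd0).mono fun y =>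
    closedAt_sum), res_sum hd0, Finset.sum_congr rfl fun x hx => hdq x (hF' hx)] at hres
  rwa [← Finset.sum_insert_of_eq_zero_if_notMem fun h => (hm 0 h).res_eq_zero,
    ← Finset.insert_erase (Finset.mem_insert_self 0 F), Finset.erase_insert_eq_erase,
    Finset.sum_insert (Finset.notMem_erase 0 F)]

theorem sum_res_eq_zero_of_subset_range {f : ℂ → X} (hf : IsOpenEmbedding f)
    {F : Finset X} {m : Cochain X} (hm : ∀ z ∉ F, ClosedAt m z) {K : Set X} (hK : IsCompact K)
    (hKf : K ⊆ range f) (h : ∀ z ∉ K, ZeroAt m z) : ∑ x ∈ F, res m x = 0 := by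
  rw [← Finset.sum_preimage f F hf.injective.injOn (res m) fun x _ hx =>
    (h x fun hxK => hx (hKf hxK)).closedAt.res_eq_zero,
    Finset.sum_congr rfl fun z _ => (res_congr (resTriv_pull_iff hf)).symm]
  refine sum_res_complex_eq_zero (fun z hz => ?_)
    ((hf.isInducing.isCompact_preimage_iff hKf).2 hK)
    fun z hz => ZeroAt.pull hf.continuous.continuousAt (h _ hz)
  exact (closedAt_pull_iff hf).2 (hm _ fun hzF => hz (Finset.mem_preimage.2 hzF))

end AlexanderSpanier

namespace AlexanderSpanier

variable {X : Type*} [TopologicalSpace X] {m : Cochain X} {x : X}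

theorem ZeroAt.add_cobd_congr {u v : X → ZMod 2} (hu : ZeroAt (m + cobd u) x) (h : u =ᶠ[𝓝 x] v) :
    ZeroAt (m + cobd v) x := by
  filter_upwards [hu, h.prodMk_nhds h] with p hp hpv
  simpa only [Pi.add_apply, cobd, hpv.1, hpv.2] using hp

theorem exists_primitive_of_finset_cover {ι : Type*} {t : Finset ι} {B : ι → Set X}
    {u : ι → X → ZMod 2} {V : Set X} (hB : ∀ i ∈ t, IsOpen (B i))
    (hu : ∀ i ∈ t, ∀ z ∈ B i, ZeroAt (m + cobd (u i)) z)
    (hV : ∀ i ∈ t, u i = 0 ∨ closure (B i) ⊆ V) :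
    ∃ w : X → ZMod 2, tsupport w ⊆ V ∧
      ∀ z ∈ ⋃ i ∈ t, B i, z ∉ ⋃ i ∈ t, frontier (B i) → ZeroAt (m + cobd w) z := by
  classical
  induction t using Finset.induction_on with
  | empty => exact ⟨0, by simp, by simp⟩
  | insert i t _ ih =>
    rw [Finset.forall_mem_insert] at hB hu hV
    obtain ⟨w, hwV, hw⟩ := ih hB.2 hu.2 hV.2
    refine ⟨(B i).piecewise (u i) w, ?_, fun z hz hzQ => ?_⟩
    · rcases hV.1 with h0 | hiV
      · refine (closure_mono fun z hz => ?_).trans hwV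
        by_cases hzi : z ∈ B i <;> simp_all
      · refine (closure_minimal (fun z hz => ?_)
          (isClosed_closure.union (isClosed_tsupport w))).trans (union_subset hiV hwV)
        by_cases hzi : z ∈ B i
        · exact Or.inl (subset_closure hzi)
        · exact Or.inr (subset_tsupport w (by simpa [hzi] using hz))
    · rw [Finset.set_biUnion_insert] at hz hzQ
      rw [mem_union, not_or] at hzQ
      by_cases hzi : z ∈ B i
      · refine (hu.1 z hzi).add_cobd_congr ?_
        filter_upwards [hB.1.mem_nhds hzi] with y hy using (piecewise_eq_of_mem _ _ _ hy).symm
      · refine (hw z (hz.resolve_left hzi) hzQ.2).add_cobd_congr ?_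
        have hzc : z ∉ closure (B i) := fun h => hzQ.1 ⟨h, hB.1.interior_eq.symm ▸ hzi⟩
        filter_upwards [isClosed_closure.compl_mem_nhds hzc] with y hy
        exact (piecewise_eq_of_notMem _ _ _ fun h => hy (subset_closure h)).symm

theorem finite_sphere_inter_sphere {c₁ c₂ : ℂ} (hc : c₁ ≠ c₂) (r₁ r₂ : ℝ) :
    (Metric.sphere c₁ r₁ ∩ Metric.sphere c₂ r₂).Finite := by
  rcases (Metric.sphere c₁ r₁ ∩ Metric.sphere c₂ r₂).subsingleton_or_nontrivial with h | h
  · exact h.finite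
  · obtain ⟨p, hp, q, hq, hpq⟩ := h
    refine (toFinite {p, q}).subset fun z hz => ?_
    exact EuclideanGeometry.eq_of_dist_eq_of_dist_eq_of_finrank_eq_two
      Complex.finrank_real_complex hc hpq hp.1 hq.1 hz.1 hp.2 hq.2 hz.2

theorem exists_primitive_near_sphere {m : Cochain ℂ} {V : Set ℂ} (hV : IsOpen V) {r : ℝ}
    (hr : r ≠ 0) (hm : ∀ z ∈ Metric.sphere 0 r, ClosedAt m z)
    (h0 : ∀ z ∈ Metric.sphere 0 r \ V, ZeroAt m z) :
    ∃ (w : ℂ → ZMod 2) (Q : Finset ℂ), tsupport w ⊆ V ∧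
      ∀ z ∈ Metric.sphere 0 r, z ∉ Q → ZeroAt (m + cobd w) z := by
  have hloc (y : ℂ) (hy : y ∈ Metric.sphere 0 r) : ∃ (u : ℂ → ZMod 2) (ρ : ℝ), 0 < ρ ∧
      (∀ z ∈ Metric.closedBall y ρ, ZeroAt (m + cobd u) z) ∧
        (u = 0 ∨ Metric.closedBall y ρ ⊆ V) := by
    by_cases hyV : y ∈ V
    · obtain ⟨u, hu⟩ := hm y hy
      obtain ⟨ρ, hρ, h⟩ := Metric.nhds_basis_closedBall.mem_iff.1
        (inter_mem hu.eventually (hV.mem_nhds hyV))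
      exact ⟨u, ρ, hρ, fun z hz => (h hz).1, Or.inr fun z hz => (h hz).2⟩
    · obtain ⟨ρ, hρ, h⟩ := Metric.nhds_basis_closedBall.mem_iff.1 (h0 y ⟨hy, hyV⟩).eventually
      exact ⟨0, ρ, hρ, fun z hz => zeroAt_add_cobd_zero_iff.2 (h hz), Or.inl rfl⟩
  choose! u ρ hρ hu huV using hloc
  obtain ⟨t, ht, hcov⟩ := (isCompact_sphere (0 : ℂ) r).elim_nhds_subcover
    (fun y => Metric.ball y (ρ y)) fun y hy => Metric.ball_mem_nhds y (hρ y hy)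
  obtain ⟨w, hwV, hw⟩ := exists_primitive_of_finset_cover (fun y _ => Metric.isOpen_ball)
    (fun y hy z hz => hu y (ht y hy) z (Metric.ball_subset_closedBall hz))
    fun y hy => (huV y (ht y hy)).imp_right Metric.closure_ball_subset_closedBall.trans
  have hQ : (⋃ y ∈ t, Metric.sphere 0 r ∩ Metric.sphere y (ρ y)).Finite := by
    refine t.finite_toSet.biUnion fun y hy => finite_sphere_inter_sphere ?_ r (ρ y)
    rintro rfl
    exact hr (by simpa using (ht 0 hy).symm)
  refine ⟨w, hQ.toFinset, hwV, fun z hz hzQ => hw z (hcov hz) fun hzB => hzQ ?_⟩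
  obtain ⟨y, hy, hzy⟩ := mem_iUnion₂.1 hzB
  rw [hQ.mem_toFinset]
  exact mem_iUnion₂.2 ⟨y, hy, hz, Metric.frontier_ball_subset_sphere hzy⟩

theorem exists_sphere_disjoint {C F : Set ℂ} (hC : Bornology.IsBounded C) (hF : F.Finite) :
    ∃ r > 0, C ⊆ Metric.ball 0 r ∧ Disjoint (Metric.sphere 0 r) F := by
  obtain ⟨R, hR⟩ := hC.subset_ball 0
  obtain ⟨r, hrR, hrF⟩ := (Ioi_infinite (max R 0)).exists_notMem_finite (hF.image norm)
  obtain ⟨hRr, hr⟩ := max_lt_iff.1 (mem_Ioi.1 hrR)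
  refine ⟨r, hr, hR.trans (Metric.ball_subset_ball hRr.le), disjoint_left.2 fun z hz hzF => ?_⟩
  exact hrF ⟨z, hzF, mem_sphere_zero_iff_norm.1 hz⟩

/-- A cochain which agrees with `m` up to a coboundary inside `N` and vanishes outside `N`; it is
closed at the boundary points of `N` near which `W` is a primitive of `m`. -/
noncomputable def cutoff (N : Set X) (W : X → ZMod 2) (m : Cochain X) : Cochain X :=
  restr N (m + cobd W) + cobd (N.indicator W)

variable {N : Set X} {W : X → ZMod 2}

theorem zeroAt_add_cutoff (hx : N ∈ 𝓝 x) : ZeroAt (m + cutoff N W m) x :=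
  zeroAt_of_mem_nhds hx fun a ha b hb => by
    simp only [Pi.add_apply, cutoff, restr_of_mem ha hb, cobd, indicator_of_mem ha,
      indicator_of_mem hb, ← add_assoc, CharTwo.add_self_eq_zero, zero_add]
    grind

theorem zeroAt_cutoff_of_compl (hx : Nᶜ ∈ 𝓝 x) : ZeroAt (cutoff N W m) x :=
  zeroAt_of_mem_nhds hx fun a ha b hb => by
    have hab : restr N (m + cobd W) a b = 0 :=
      by_contra fun hab => ha (suppIn_restr _ _ _ _ hab).1
    rw [cutoff, Pi.add_apply, Pi.add_apply, hab, cobd, indicator_of_notMem ha,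
      indicator_of_notMem hb, add_zero, add_zero]

theorem closedAt_cutoff (h : ZeroAt (m + cobd W) x) : ClosedAt (cutoff N W m) x :=
  (h.restr N).closedAt.add (closedAt_cobd _ x)

theorem ZeroAt.cutoff (hm : ZeroAt m x) (hW : W =ᶠ[𝓝 x] 0) : ZeroAt (cutoff N W m) x := by
  refine ZeroAt.add_cobd_congr (u := 0) (zeroAt_add_cobd_zero_iff.2 ?_) ?_
  · exact ((zeroAt_add_cobd_zero_iff.2 hm).add_cobd_congr hW.symm).restr N
  · filter_upwards [hW] with y hy using by rw [Pi.zero_apply, indicator_apply_eq_zero.2 fun _ => hy]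

theorem mem_nhds_or_compl_mem_nhds_or_mem_image_sphere [T2Space X] {f : ℂ → X}
    (hf : IsOpenEmbedding f) (r : ℝ) (x : X) :
    f '' Metric.closedBall 0 r ∈ 𝓝 x ∨ (f '' Metric.closedBall 0 r)ᶜ ∈ 𝓝 x ∨
      x ∈ f '' Metric.sphere 0 r := by
  by_cases hx : x ∈ f '' Metric.closedBall 0 r
  · obtain ⟨z, hz, rfl⟩ := hx
    rcases (Metric.mem_closedBall.1 hz).lt_or_eq with h | h
    · exact Or.inl (hf.isOpenMap.image_mem_nhds (Metric.closedBall_mem_nhds_of_mem h))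
    · exact Or.inr (Or.inr ⟨z, h, rfl⟩)
  · exact Or.inr (Or.inl (((isCompact_closedBall 0 r).image hf.continuous).isClosed.compl_mem_nhds
      hx))

theorem exists_primitive_near_image_sphere {f : ℂ → X} (hf : IsOpenEmbedding f) {V K : Set X}
    (hV : IsOpen V) (hK : IsCompact (f ⁻¹' (K \ V))) {F : Finset X}
    (hm : ∀ z ∉ F, ClosedAt m z) (h0 : ∀ z ∉ K, ZeroAt m z) :
    ∃ (r : ℝ) (W : X → ZMod 2) (Q : Finset ℂ), f ⁻¹' (K \ V) ⊆ Metric.ball 0 r ∧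
      (∀ z ∈ Metric.sphere 0 r, z ∉ Q → ZeroAt (m + cobd W) (f z)) ∧
      ∀ z ∈ Metric.sphere 0 r, f z ∉ V → ZeroAt m (f z) ∧ W =ᶠ[𝓝 (f z)] 0 := by
  obtain ⟨r, hr, hrK, hrF⟩ := exists_sphere_disjoint hK.isBounded
    (F.finite_toSet.preimage hf.injective.injOn)
  have h0r (z : ℂ) (hz : z ∈ Metric.sphere 0 r) (hzV : f z ∉ V) : ZeroAt m (f z) :=
    h0 _ fun hzK => Metric.sphere_disjoint_ball.notMem_of_mem_left hz (hrK ⟨hzK, hzV⟩)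
  obtain ⟨w, Q, hwV, hw⟩ := exists_primitive_near_sphere (m := pull f m)
    (hV.preimage hf.continuous) hr.ne'
    (fun z hz => (closedAt_pull_iff hf).2 (hm _ (hrF.notMem_of_mem_left hz)))
    fun z hz => (h0r z hz.1 hz.2).pull hf.continuous.continuousAt
  refine ⟨r, Function.extend f w 0, Q, hrK, fun z hz hzQ => zeroAt_add_cobd_extend hf (hw z hz hzQ),
    fun z hz hzV => ⟨h0r z hz hzV, ?_⟩⟩
  rw [← hf.map_nhds_eq, EventuallyEq, eventually_map]
  filter_upwards [notMem_tsupport_iff_eventuallyEq.1 fun h => hzV (hwV h)] with y hy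
  rw [hf.injective.extend_apply, hy, Pi.zero_apply, Pi.zero_apply]

-- Up to sign, `n` is the part of `m` inside a large disc of the chart `f`, so `m + n` is the part
-- outside this disc.
theorem exists_splitting [T2Space X] {f : ℂ → X} (hf : IsOpenEmbedding f) {V K : Set X}
    (hV : IsOpen V) (hK : IsCompact K) (hKV : K ⊆ range f ∪ V) {F : Finset X}
    (hm : ∀ z ∉ F, ClosedAt m z) (h0 : ∀ z ∉ K, ZeroAt m z) :
    ∃ (n : Cochain X) (F' : Finset X) (K₁ K₂ : Set X),
      (∀ z ∉ F', ClosedAt n z) ∧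
      IsCompact K₁ ∧ K₁ ⊆ range f ∧ (∀ z ∉ K₁, ZeroAt n z) ∧
      IsCompact K₂ ∧ K₂ ⊆ V ∧ ∀ z ∉ K₂, ZeroAt (m + n) z := by
  classical
  have hKV' : K \ V ⊆ range f := fun x hx => (hKV hx.1).resolve_right hx.2
  obtain ⟨r, W, Q, hrK, hW, hWV⟩ := exists_primitive_near_image_sphere hf hV
    ((hf.isInducing.isCompact_preimage_iff hKV').2 (hK.diff hV)) hm h0
  let N : Set X := f '' Metric.closedBall 0 r
  have hN : IsCompact N := (isCompact_closedBall 0 r).image hf.continuous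
  have hNx := mem_nhds_or_compl_mem_nhds_or_mem_image_sphere hf r
  have hnN (x : X) (hx : x ∉ N) : ZeroAt (cutoff N W m) x :=
    zeroAt_cutoff_of_compl (hN.isClosed.compl_mem_nhds hx)
  refine ⟨cutoff N W m, F ∪ Q.image f, N, {x | ¬ ZeroAt (m + cutoff N W m) x},
    fun x hx => ?_, hN, image_subset_range _ _, hnN, ?_, fun x hx => ?_, fun x hx => not_not.1 hx⟩
  · rw [Finset.notMem_union] at hx
    rcases hNx x with h | h | ⟨z, hz, rfl⟩
    · rw [← closedAt_add_iff (hm x hx.1), add_comm]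
      exact (zeroAt_add_cutoff h).closedAt
    · exact (zeroAt_cutoff_of_compl h).closedAt
    · exact closedAt_cutoff (hW z hz fun hzQ => hx.2 (Finset.mem_image_of_mem f hzQ))
  · refine (hK.union hN).of_isClosed_subset (isOpen_setOf_zeroAt _).isClosed_compl fun x hx => ?_
    by_contra hxKN
    rw [mem_union, not_or] at hxKN
    exact hx ((h0 x hxKN.1).add (hnN x hxKN.2))
  · by_contra hxV
    refine hx ?_
    rcases hNx x with h | h | ⟨z, hz, rfl⟩
    · exact zeroAt_add_cutoff h
    · refine (h0 x fun hxK => mem_of_mem_nhds h ?_).add (zeroAt_cutoff_of_compl h)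
      obtain ⟨z, rfl⟩ := hKV' ⟨hxK, hxV⟩
      exact mem_image_of_mem f (Metric.ball_subset_closedBall (hrK ⟨hxK, hxV⟩))
    · exact (hWV z hz hxV).1.add ((hWV z hz hxV).1.cutoff (hWV z hz hxV).2)

theorem sum_res_eq_zero [T2Space X] [LocallyPlane X] {F : Finset X} {m : Cochain X}
    (hm : ∀ z ∉ F, ClosedAt m z) {K : Set X} (hK : IsCompact K) (h : ∀ z ∉ K, ZeroAt m z) :
    ∑ x ∈ F, res m x = 0 := by
  classical
  choose f hf hf0 using fun x : X => LocallyPlane.exists_isOpenEmbedding x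
  obtain ⟨t, -, ht⟩ := hK.elim_nhds_subcover (fun x => range (f x)) fun x _ =>
    (hf x).isOpen_range.mem_nhds ⟨0, hf0 x⟩
  induction t using Finset.induction_on generalizing F m K with
  | empty =>
    exact Finset.sum_eq_zero fun x _ => (h x fun hx => by simpa using ht hx).closedAt.res_eq_zero
  | insert i t _ ih =>
    rw [Finset.set_biUnion_insert] at ht
    obtain ⟨n, F', K₁, K₂, hn, hK₁, hK₁f, hn0, hK₂, hK₂t, hmn0⟩ :=
      exists_splitting (hf i) (isOpen_biUnion fun j _ => (hf j).isOpen_range) hK ht hm h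
    have hm' (z : X) (hz : z ∉ F ∪ F') : ClosedAt m z := hm z (Finset.notMem_union.1 hz).1
    have hn' (z : X) (hz : z ∉ F ∪ F') : ClosedAt n z := hn z (Finset.notMem_union.1 hz).2
    have hadd (x : X) : res (m + n) x = res m x + res n x :=
      res_add (eventually_nhdsNE_of_finite (F ∪ F').finite_toSet hm' x)
        (eventually_nhdsNE_of_finite (F ∪ F').finite_toSet hn' x)
    calc ∑ x ∈ F, res m x
      _ = ∑ x ∈ F ∪ F', res m x :=
        Finset.sum_subset Finset.subset_union_left fun x _ hx => (hm x hx).res_eq_zero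
      _ = ∑ x ∈ F ∪ F', res (m + n) x + ∑ x ∈ F ∪ F', res n x := by
        simp only [hadd, Finset.sum_add_distrib, CharTwo.add_cancel_right]
      _ = 0 := by
        rw [ih (fun z hz => (hm' z hz).add (hn' z hz)) hK₂ hmn0 hK₂t,
          sum_res_eq_zero_of_subset_range (hf i) hn' hK₁ hK₁f hn0, add_zero]

theorem IsDipole.exists_trans [T2Space X] [LocallyPlane X] {d d' : Cochain X} {p q r : X}
    (h : IsDipole d p q) (h' : IsDipole d' q r) (hpq : p ≠ q) (hqr : q ≠ r) (hpr : p ≠ r) :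
    ∃ d'', IsDipole d'' p r := by
  have hq : ResTriv (d + d') q := by
    rw [← res_eq_zero_iff, res_add (h.eventually_closedAt q) (h'.eventually_closedAt q),
      res_eq_one_iff.2 h.not_resTriv_right, res_eq_one_iff.2 h'.not_resTriv_left,
      CharTwo.add_self_eq_zero]
  obtain ⟨C, hC, hdC⟩ := h.exists_isCompact
  obtain ⟨C', hC', hdC'⟩ := h'.exists_isCompact
  obtain ⟨U, hU, hUq⟩ := exists_compact_mem_nhds q
  obtain ⟨κ, hκU, hκ, hκq⟩ := hq.exists_closedAt_add hUq
  refine ⟨d + d' + κ, ⟨C ∪ C' ∪ U, (hC.union hC').union hU, ?_⟩, fun z hz => ?_, ?_, ?_⟩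
  · exact ((hdC.mono (subset_union_left.trans subset_union_left)).add
      (hdC'.mono (subset_union_right.trans subset_union_left))).add (hκU.mono subset_union_right)
  · rw [mem_insert_iff, mem_singleton_iff, not_or] at hz
    by_cases hzq : z = q
    · rwa [hzq]
    · exact ((h.closedAt z (by simp [hz.1, hzq])).add (h'.closedAt z (by simp [hz.2, hzq]))).add
        (hκ z hzq).closedAt
  · rw [resTriv_add_iff (hκ p hpq).closedAt.resTriv,
      resTriv_add_iff (h'.closedAt p (by simp [hpq, hpr])).resTriv]
    exact h.not_resTriv_left
  · rw [resTriv_add_iff (hκ r hqr.symm).closedAt.resTriv, add_comm,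
      resTriv_add_iff (h.closedAt r (by simp [hpr.symm, hqr.symm])).resTriv]
    exact h'.not_resTriv_right

theorem exists_isDipole [T2Space X] [PreconnectedSpace X] [LocallyPlane X] {p q : X}
    (hpq : p ≠ q) : ∃ d, IsDipole d p q := by
  let R (p q : X) : Prop := p = q ∨ ∃ d, IsDipole d p q
  have hsymm : Std.Symm R := ⟨fun _ _ => Or.imp Eq.symm fun ⟨d, hd⟩ => ⟨d, hd.symm⟩⟩
  refine (PreconnectedSpace.induction₂ R (fun x => ?_) ⟨fun x y z h h' => ?_⟩ p q).resolve_left hpq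
  · obtain ⟨f, hf, rfl⟩ := LocallyPlane.exists_isOpenEmbedding x
    filter_upwards [hf.isOpen_range.mem_nhds ⟨0, rfl⟩]
    rintro _ ⟨z, rfl⟩
    refine or_iff_not_imp_left.2 fun h => ?_
    obtain ⟨d, hd⟩ := exists_isDipole_complex (ne_of_apply_ne f h)
    exact hd.exists_of_isOpenEmbedding hf
  · rcases h with rfl | ⟨d, hd⟩
    · exact h'
    rcases h' with rfl | ⟨d', hd'⟩
    · exact Or.inr ⟨d, hd⟩
    by_cases hxy : x = y
    · exact Or.inr ⟨d', hxy ▸ hd'⟩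
    by_cases hyz : y = z
    · exact Or.inr ⟨d, hyz ▸ hd⟩
    exact or_iff_not_imp_left.2 (hd.exists_trans hd' hxy hyz)

/-- The sum of a locally finite family of cochains. -/
noncomputable def locSum {X ι : Type*} (c : ι → Cochain X) : Cochain X := fun a b => ∑ᶠ i, c i a b

section locSum

variable {ι : Type*} {c : ι → Cochain X} {D : ι → Set X}

theorem exists_zeroAt_locSum_add_sum (hD : LocallyFinite D) (hc : ∀ i, SuppIn (c i) (D i))
    (x : X) : ∃ A : Finset ι, ∀ A', A ⊆ A' → ZeroAt (locSum c + ∑ i ∈ A', c i) x := by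
  obtain ⟨B, hB, hfin⟩ := hD x
  refine ⟨hfin.toFinset, fun A' hA' => zeroAt_of_mem_nhds hB fun a ha b _ => ?_⟩
  have hab : locSum c a b = ∑ i ∈ A', c i a b := finsum_eq_sum_of_support_subset _ fun i hi =>
    hA' (hfin.mem_toFinset.2 ⟨a, (hc i a b hi).1, ha⟩)
  simp only [Pi.add_apply, Finset.sum_apply, hab, CharTwo.add_self_eq_zero]

theorem zeroAt_locSum (hD : LocallyFinite D) (hc : ∀ i, SuppIn (c i) (D i))
    (h : ∀ i, ZeroAt (c i) x) : ZeroAt (locSum c) x := by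
  obtain ⟨A, hA⟩ := exists_zeroAt_locSum_add_sum hD hc x
  exact (zeroAt_add_iff (zeroAt_sum fun i _ => h i)).1 (hA A subset_rfl)

theorem closedAt_locSum_add_sum (hD : LocallyFinite D) (hc : ∀ i, SuppIn (c i) (D i))
    {P : Finset ι} (h : ∀ i ∉ P, ClosedAt (c i) x) : ClosedAt (locSum c + ∑ i ∈ P, c i) x := by
  classical
  obtain ⟨A, hA⟩ := exists_zeroAt_locSum_add_sum hD hc x
  have hAP := (hA (A ∪ P) Finset.subset_union_left).closedAt
  rwa [← Finset.sum_sdiff Finset.subset_union_right, add_left_comm, add_comm,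
    closedAt_add_iff (closedAt_sum fun i hi => h i (Finset.mem_sdiff.1 hi).2)] at hAP

theorem locSum_add {c' : ι → Cochain X} (hD : LocallyFinite D) (hc : ∀ i, SuppIn (c i) (D i))
    (hc' : ∀ i, SuppIn (c' i) (D i)) : locSum (c + c') = locSum c + locSum c' := by
  ext a b
  exact finsum_add_distrib ((hD.point_finite a).subset fun i hi => (hc i a b hi).1)
    ((hD.point_finite a).subset fun i hi => (hc' i a b hi).1)

end locSum

end AlexanderSpanier

/-! ### Almost invariant functions and chains of dipoles -/

/-- A function on a group is almost invariant if every right translation changes it at only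
finitely many places. -/
def IsAlmostInvariant {Γ β : Type*} [Mul Γ] (e : Γ → β) : Prop :=
  ∀ k, {g | e (g * k) ≠ e g}.Finite

/-- An almost invariant function which separates the two ends of the cyclic subgroup generated
by `t`: it is the indicator function of the nonnegative powers on that subgroup. -/
structure SeparatesEnds {Γ : Type*} [Group Γ] (e : Γ → ZMod 2) (t : Γ) : Prop where
  isAlmostInvariant : IsAlmostInvariant e
  zpow_of_nonneg (n : ℤ) : 0 ≤ n → e (t ^ n) = 1
  zpow_of_neg (n : ℤ) : n < 0 → e (t ^ n) = 0

namespace SeparatesEnds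

variable {Γ Γ' : Type*} [Group Γ] [Group Γ'] {t : Γ}

theorem injective_zpow {e : Γ → ZMod 2} (h : SeparatesEnds e t) :
    Function.Injective fun n : ℤ => t ^ n := by
  rw [injective_zpow_iff_not_isOfFinOrder, ← isOfFinOrder_inv_iff, isOfFinOrder_iff_pow_eq_one]
  rintro ⟨n, hn, htn⟩
  refine zero_ne_one (α := ZMod 2) ?_
  rw [← h.zpow_of_neg (-n) (by lia), ← h.zpow_of_nonneg 0 le_rfl, zpow_neg, zpow_natCast,
    ← inv_pow, htn, zpow_zero]

protected theorem comp {e : Γ' → ZMod 2} {f : Γ →* Γ'} (h : SeparatesEnds e (f t))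
    (hf : Function.Injective f) : SeparatesEnds (e ∘ f) t where
  isAlmostInvariant k := by
    refine ((h.isAlmostInvariant (f k)).preimage hf.injOn).subset fun g hg => ?_
    simpa only [mem_preimage, mem_ofPred_eq, Function.comp_apply, map_mul] using hg
  zpow_of_nonneg n hn := by
    rw [Function.comp_apply, map_zpow, h.zpow_of_nonneg n hn]
  zpow_of_neg n hn := by
    rw [Function.comp_apply, map_zpow, h.zpow_of_neg n hn]

end SeparatesEnds

section ProperAction

variable {Γ X : Type*} [Group Γ] [TopologicalSpace X] [MulAction Γ X]
  [ProperlyDiscontinuousSMul Γ X]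

theorem injective_zpow_smul {t : Γ} (ht : Function.Injective fun n : ℤ => t ^ n) (p : X) :
    Function.Injective fun n : ℤ => t ^ n • p := by
  intro i j hij
  by_contra hne
  have hfix : t ^ (i - j) ∈ MulAction.stabilizer Γ p := by
    rw [MulAction.mem_stabilizer_iff, sub_eq_neg_add, zpow_add, mul_smul,
      show t ^ i • p = _ from hij, ← mul_smul,
      ← zpow_add, neg_add_cancel, zpow_zero, one_smul]
  have hfin : (MulAction.stabilizer Γ p : Set Γ).Finite :=
    (ProperlyDiscontinuousSMul.finite_disjoint_inter_image isCompact_singleton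
      isCompact_singleton).subset fun g hg => ⟨p, ⟨p, rfl, hg⟩, rfl⟩
  refine infinite_range_of_injective
    (ht.comp (mul_right_injective₀ (sub_ne_zero.2 hne))) (hfin.subset ?_)
  rintro _ ⟨k, rfl⟩
  simpa only [Function.comp_apply, zpow_mul, SetLike.mem_coe] using Subgroup.zpow_mem _ hfix k

theorem IsAlmostInvariant.exists_eventuallyEq_const [ContinuousConstSMul Γ X]
    [WeaklyLocallyCompactSpace X] [R1Space X] {β : Type*} {e : Γ → β} (he : IsAlmostInvariant e)
    {C C₀ : Set X} (hC : IsCompact C) (hCX : ∀ x, ∃ g : Γ, ∃ y ∈ C, g • y = x)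
    (hC₀ : IsCompact C₀) :
    ∃ (φ : X → β) (K : Set X), IsCompact K ∧ ∀ x ∉ K, φ =ᶠ[𝓝 x] (fun _ => φ x) ∧
      ∀ g : Γ, x ∈ (g • ·) '' C₀ → φ x = e g := by
  obtain ⟨C', hC', hCC'⟩ := exists_compact_superset (hC.union hC₀)
  choose r y hyC hry using hCX
  let bad : Set Γ := ⋃ k ∈ {k : Γ | ((k • ·) '' C ∩ C').Nonempty}, {g | e (g * k) ≠ e g}
  have hbad : bad.Finite :=
    (ProperlyDiscontinuousSMul.finite_disjoint_inter_image hC hC').biUnion fun k _ => he k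
  let K : Set X := ⋃ g ∈ bad, (g • ·) '' C'
  have hφ {g : Γ} (hg : g ∉ bad) {x : X} (hx : x ∈ (g • ·) '' C') : e (r x) = e g := by
    obtain ⟨w, hw, rfl⟩ := hx
    by_contra hne
    refine hg (mem_iUnion₂.2 ⟨g⁻¹ * r (g • w), ⟨w, ⟨y (g • w), hyC _, ?_⟩, hw⟩, ?_⟩)
    · simp only [mul_smul, hry, inv_smul_smul]
    · rwa [mem_ofPred_eq, mul_inv_cancel_left]
  have hgood {x : X} (hx : x ∉ K) {g : Γ} (hg : x ∈ (g • ·) '' C') : g ∉ bad := fun hgb =>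
    hx (mem_iUnion₂.2 ⟨g, hgb, hg⟩)
  refine ⟨e ∘ r, K, hbad.isCompact_biUnion fun g _ => hC'.image (continuous_const_smul g),
    fun x hx => ⟨?_, fun g hg => ?_⟩⟩
  · have hxC' : x ∈ (r x • ·) '' interior C' := ⟨y x, hCC' (Or.inl (hyC x)), hry x⟩
    filter_upwards [(isOpenMap_smul (r x) _ isOpen_interior).mem_nhds hxC'] with z hz
    exact hφ (hgood hx (image_mono interior_subset hxC')) (image_mono interior_subset hz)
  · have hg' := image_mono ((subset_union_right.trans hCC').trans interior_subset) hg
    exact hφ (hgood hx hg') hg'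

end ProperAction

namespace AlexanderSpanier

theorem exists_isDipole_closedAt_add {X : Type*} [TopologicalSpace X] [T2Space X]
    [PreconnectedSpace X] [LocallyPlane X] (T : X ≃ₜ X) {p : X} (hp : T p ≠ p) :
    ∃ d : Cochain X, IsDipole d p (T p) ∧ ClosedAt (d + pull T d) p := by
  obtain ⟨d, hd⟩ := exists_isDipole hp.symm
  have hTd : ∀ᶠ y in 𝓝[≠] p, ClosedAt (pull T d) y :=
    eventually_nhdsNE_of_finite ((Set.toFinite {p, T p}).preimage T.injective.injOn)
      (fun y hy => (hd.closedAt _ hy).pull T.continuous.continuousAt) p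
  have hres : ResTriv (d + pull T d) p := by
    rw [← res_eq_zero_iff, res_add (hd.eventually_closedAt p) hTd,
      res_eq_one_iff.2 hd.not_resTriv_left,
      res_eq_one_iff.2 (mt (resTriv_pull_iff T.isOpenEmbedding).1 hd.not_resTriv_right),
      CharTwo.add_self_eq_zero]
  obtain ⟨U, hU, hUp⟩ := exists_compact_mem_nhds p
  obtain ⟨κ, hκU, hκ, hκp⟩ := hres.exists_closedAt_add hUp
  obtain ⟨C, hC, hdC⟩ := hd.exists_isCompact
  have hκne (y : X) : ResTriv κ y := resTriv_of_eventually_zeroAt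
    (eventually_nhdsNE_of_finite (finite_singleton p) hκ y)
  refine ⟨d + κ, ⟨⟨C ∪ U, hC.union hU, (hdC.mono subset_union_left).add
    (hκU.mono subset_union_right)⟩, fun z hz => (hd.closedAt z hz).add
    (hκ z fun h => hz (Or.inl h)).closedAt, ?_, ?_⟩, ?_⟩
  · exact (resTriv_add_iff (hκne _)).not.2 hd.not_resTriv_left
  · exact (resTriv_add_iff (hκne _)).not.2 hd.not_resTriv_right
  · have hTκ : ClosedAt (pull T κ) p := (hκ _ hp).closedAt.pull T.continuous.continuousAt
    convert hκp.add hTκ using 1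
    exact (add_add_add_comm d κ (pull T d) (pull T κ)).trans (add_assoc _ _ _).symm

/-- A locally finite bi-infinite chain of dipoles: `c n` has poles at `x n` and `x (n + 1)` only
and is supported in `D n`, and consecutive poles cancel. -/
structure DipoleChain {X : Type*} [TopologicalSpace X] (c : ℤ → Cochain X) (x : ℤ → X)
    (D : ℤ → Set X) : Prop where
  injective : Function.Injective x
  suppIn (n : ℤ) : SuppIn (c n) (D n)
  isClosed (n : ℤ) : IsClosed (D n)
  locallyFinite : LocallyFinite D
  closedAt (n : ℤ) : ∀ z ∉ ({x n, x (n + 1)} : Set X), ClosedAt (c n) z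
  closedAt_add (n : ℤ) : ClosedAt (c n + c (n + 1)) (x (n + 1))
  not_resTriv : ¬ ResTriv (c 0) (x 0)

namespace DipoleChain

variable {X : Type*} [TopologicalSpace X] {c : ℤ → Cochain X} {x : ℤ → X} {D : ℤ → Set X}
  {J : Set ℤ} {z : X}

theorem suppIn_indicator (h : DipoleChain c x D) (J : Set ℤ) (n : ℤ) :
    SuppIn (J.indicator c n) (D n) := by
  by_cases hn : n ∈ J
  · rw [indicator_of_mem hn]
    exact h.suppIn n
  · rw [indicator_of_notMem hn]
    exact fun a b hab => absurd rfl hab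

theorem zeroAt_locSum_indicator (h : DipoleChain c x D) (hz : ∀ n ∈ J, z ∉ D n) :
    ZeroAt (locSum (J.indicator c)) z := by
  refine zeroAt_locSum h.locallyFinite (h.suppIn_indicator J) fun n => ?_
  by_cases hn : n ∈ J
  · exact (h.suppIn_indicator J n).zeroAt (h.isClosed n) (hz n hn)
  · rw [indicator_of_notMem hn]
    exact zeroAt_zero z

theorem closedAt_indicator (h : DipoleChain c x D) {n : ℤ}
    (hz : n ∈ J → z ∉ ({x n, x (n + 1)} : Set X)) : ClosedAt (J.indicator c n) z := by
  by_cases hn : n ∈ J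
  · rw [indicator_of_mem hn]
    exact h.closedAt n z (hz hn)
  · rw [indicator_of_notMem hn]
    exact (zeroAt_zero z).closedAt

theorem closedAt_locSum_indicator (h : DipoleChain c x D)
    (hz : ∀ n, z = x (n + 1) → (n ∈ J ↔ n + 1 ∈ J)) :
    ClosedAt (locSum (J.indicator c)) z := by
  by_cases hzx : ∃ n, z = x (n + 1)
  · obtain ⟨n, rfl⟩ := hzx
    have hpair : ClosedAt (∑ i ∈ {n, n + 1}, J.indicator c i) (x (n + 1)) := by
      rw [Finset.sum_pair (by lia)]
      by_cases hn : n ∈ J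
      · rw [indicator_of_mem hn, indicator_of_mem ((hz n rfl).1 hn)]
        exact h.closedAt_add n
      · rw [indicator_of_notMem hn, indicator_of_notMem (mt (hz n rfl).2 hn), add_zero]
        exact (zeroAt_zero _).closedAt
    refine (closedAt_add_iff hpair).1 (closedAt_locSum_add_sum h.locallyFinite
      (h.suppIn_indicator J) fun i hi => h.closedAt_indicator fun _ => ?_)
    simp only [Finset.mem_insert, Finset.mem_singleton] at hi
    simp only [mem_insert_iff, mem_singleton_iff, h.injective.eq_iff]
    lia
  · rw [not_exists] at hzx
    refine (closedAt_add_iff (zeroAt_zero z).closedAt).1 (closedAt_locSum_add_sum (P := ∅)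
      h.locallyFinite (h.suppIn_indicator J) fun n _ => h.closedAt_indicator fun _ => ?_)
    rintro (hzn | hzn)
    · exact hzx (n - 1) (by rw [hzn, sub_add_cancel])
    · exact hzx n hzn

theorem closedAt_locSum (h : DipoleChain c x D) (z : X) : ClosedAt (locSum c) z := by
  rw [← indicator_univ c]
  exact h.closedAt_locSum_indicator fun _ _ => iff_of_true trivial trivial

theorem not_resTriv_locSum_indicator_Ici (h : DipoleChain c x D) :
    ¬ ResTriv (locSum ((Ici 0).indicator c)) (x 0) := by
  have hclosed : ClosedAt (locSum ((Ici 0).indicator c) + c 0) (x 0) := by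
    have := closedAt_locSum_add_sum (P := {0}) h.locallyFinite (h.suppIn_indicator (Ici 0))
      (x := x 0) fun n hn => h.closedAt_indicator fun hn0 => ?_
    · rwa [Finset.sum_singleton, indicator_of_mem self_mem_Ici] at this
    · rw [Finset.mem_singleton] at hn
      rw [mem_Ici] at hn0
      simp only [mem_insert_iff, mem_singleton_iff, h.injective.eq_iff]
      lia
  intro hres
  rw [add_comm] at hclosed
  exact h.not_resTriv ((resTriv_add_iff hres).1 hclosed.resTriv)

theorem locSum_indicator_add_compl (h : DipoleChain c x D) (J : Set ℤ) :
    locSum (J.indicator c) + locSum (Jᶜ.indicator c) = locSum c := by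
  rw [← locSum_add h.locallyFinite (h.suppIn_indicator J) (h.suppIn_indicator Jᶜ),
    indicator_self_add_compl]

theorem closedAt_locSum_indicator_Ici (h : DipoleChain c x D) (hz : z ≠ x 0) :
    ClosedAt (locSum ((Ici 0).indicator c)) z := by
  refine h.closedAt_locSum_indicator fun n hn => ?_
  have hn1 : n + 1 ≠ 0 := by
    rintro hn1
    exact hz (by rw [hn, hn1])
  simp only [mem_Ici]
  lia

theorem zeroAt_locSum_indicator_add_cobd (h : DipoleChain c x D) {φ ψ : X → ZMod 2}
    (hψ : ZeroAt (locSum c + cobd ψ) z) (hφ : φ =ᶠ[𝓝 z] fun _ => φ z)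
    (hφD : ∀ n, z ∈ D n → φ z = J.indicator 1 n) :
    ZeroAt (locSum (J.indicator c) + cobd (φ * ψ)) z := by
  have hφz : φ z = 0 ∨ φ z = 1 := by generalize φ z = i; decide +revert
  rcases hφz with hφz | hφz
  · have hJ : ZeroAt (locSum (J.indicator c)) z := h.zeroAt_locSum_indicator fun n hn hzn => by
      have := hφD n hzn
      rw [hφz, indicator_of_mem hn] at this
      exact zero_ne_one this
    refine (zeroAt_add_cobd_zero_iff.2 hJ).add_cobd_congr ?_
    filter_upwards [hφ] with y hy
    rw [Pi.mul_apply, hy, hφz, zero_mul, Pi.zero_apply]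
  · have hJ : ZeroAt (locSum (Jᶜ.indicator c)) z := h.zeroAt_locSum_indicator fun n hn hzn => by
      have := hφD n hzn
      rw [hφz, indicator_of_notMem hn] at this
      exact one_ne_zero this
    rw [← h.locSum_indicator_add_compl J, add_right_comm, zeroAt_add_iff hJ] at hψ
    refine hψ.add_cobd_congr ?_
    filter_upwards [hφ] with y hy
    rw [Pi.mul_apply, hy, hφz, one_mul]

end DipoleChain

section ProperAction

variable {Γ X : Type*} [Group Γ] [TopologicalSpace X] [MulAction Γ X] [ContinuousConstSMul Γ X]
  [ProperlyDiscontinuousSMul Γ X] [T2Space X] [LocallyPlane X]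

theorem exists_dipoleChain [PreconnectedSpace X] {t : Γ}
    (ht : Function.Injective fun n : ℤ => t ^ n) (p : X) :
    ∃ (c : ℤ → Cochain X) (C : Set X), IsCompact C ∧
      DipoleChain c (fun n => t ^ n • p) (fun n => (t ^ n • ·) '' C) := by
  have hinj := injective_zpow_smul ht p
  have htp : Homeomorph.smul t p ≠ p := by
    simpa using hinj.ne one_ne_zero
  obtain ⟨d, hd, hdadd⟩ := exists_isDipole_closedAt_add (Homeomorph.smul t) htp
  obtain ⟨C, hC, hdC⟩ := hd.exists_isCompact
  let c (n : ℤ) : Cochain X := pull (t ^ (-n) • ·) d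
  have hsmul (n : ℤ) (y : X) : t ^ n • t ^ (-n) • y = y := by
    rw [zpow_neg, smul_inv_smul]
  have hcont (n : ℤ) (z : X) : ContinuousAt (t ^ (-n) • ·) z :=
    (continuous_const_smul _).continuousAt
  refine ⟨c, C, hC, hinj, fun n a b hab => ?_, fun n => ?_, fun z => ?_, fun n z hz => ?_,
    fun n => ?_, ?_⟩
  · exact ⟨⟨_, (hdC _ _ hab).1, hsmul n a⟩, ⟨_, (hdC _ _ hab).2, hsmul n b⟩⟩
  · exact (hC.image (continuous_const_smul _)).isClosed
  · obtain ⟨B, hB, hBz⟩ := exists_compact_mem_nhds z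
    exact ⟨B, hBz, ((ProperlyDiscontinuousSMul.finite_disjoint_inter_image hC hB).preimage
      ht.injOn).subset fun n hn => hn⟩
  · refine (hd.closedAt _ fun h => hz ?_).pull (hcont n z)
    rcases h with h | h
    · exact Or.inl (by rw [← h, hsmul])
    · refine Or.inr ?_
      rw [mem_singleton_iff, zpow_add_one, mul_smul, ← hsmul n z]
      exact congrArg (t ^ n • ·) h
  · have hT : c n + c (n + 1) = pull (t ^ (-(n + 1)) • ·) (d + pull (Homeomorph.smul t) d) := by
      rw [add_comm]
      have (y : X) : t ^ (-n) • y = t • t ^ (-(n + 1)) • y := by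
        rw [smul_smul, ← zpow_one_add, neg_add_rev, add_neg_cancel_left]
      ext a b
      simp only [c, pull, Pi.add_apply, this, Homeomorph.smul_apply]
    rw [hT]
    refine ClosedAt.pull (hcont (n + 1) _) ?_
    rwa [zpow_neg, inv_smul_smul]
  · have hc0 : c 0 = d := by
      ext a b
      simp only [c, pull, neg_zero, zpow_zero, one_smul]
    simpa only [hc0, zpow_zero, one_smul] using hd.not_resTriv_left

theorem not_separatesEnds [SimplyConnectedSpace X] {C : Set X} (hC : IsCompact C)
    (hCX : ∀ x, ∃ g : Γ, ∃ y ∈ C, g • y = x) (e : Γ → ZMod 2) (t : Γ) :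
    ¬ SeparatesEnds e t := by
  intro he
  obtain ⟨p⟩ : Nonempty X := inferInstance
  obtain ⟨c, C₀, hC₀, hc⟩ := exists_dipoleChain he.injective_zpow p
  obtain ⟨ψ, hψ⟩ := exists_primitive hc.closedAt_locSum
  obtain ⟨φ, K, hK, hφ⟩ := he.isAlmostInvariant.exists_eventuallyEq_const hC hCX hC₀
  have hclosed : ∀ z ∉ ({t ^ (0 : ℤ) • p} : Finset X),
      ClosedAt (locSum ((Ici 0).indicator c) + cobd (φ * ψ)) z := fun z hz =>
    (hc.closedAt_locSum_indicator_Ici (mt Finset.mem_singleton.2 hz)).add (closedAt_cobd _ z)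
  have hzero : ∀ z ∉ K, ZeroAt (locSum ((Ici 0).indicator c) + cobd (φ * ψ)) z := fun z hz => by
    refine hc.zeroAt_locSum_indicator_add_cobd (hψ z) (hφ z hz).1 fun n hzn => ?_
    rw [(hφ z hz).2 _ hzn]
    by_cases hn : 0 ≤ n
    · rw [he.zpow_of_nonneg n hn, indicator_of_mem (mem_Ici.2 hn), Pi.one_apply]
    · rw [he.zpow_of_neg n (not_le.1 hn), indicator_of_notMem (mt mem_Ici.1 hn)]
  have hres := sum_res_eq_zero hclosed hK hzero
  rw [Finset.sum_singleton, res_eq_zero_iff, resTriv_add_iff (closedAt_cobd _ _).resTriv] at hres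
  exact hc.not_resTriv_locSum_indicator_Ici hres

end ProperAction

end AlexanderSpanier

/-! ### Free products -/

section Coprod

open Monoid Monoid.Coprod

variable {G H : Type*} [Group G] [Group H]

/-- The action of a free product on `(G ∗ H) × ZMod 2` by right translations of the first
coordinate. -/
def coprodTranslation : Coprod G H →* Equiv.Perm (Coprod G H × ZMod 2) where
  toFun g := (Equiv.mulRight g⁻¹).prodCongr (Equiv.refl _)
  map_one' := by ext x <;> simp
  map_mul' g h := by ext x <;> simp [mul_assoc]

open Classical in
/-- The indicator function of the identity. -/
noncomputable def coprodDelta (g : Coprod G H) : ZMod 2 := if g = 1 then 1 else 0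

theorem coprodDelta_one : coprodDelta (1 : Coprod G H) = 1 := if_pos rfl

theorem coprodDelta_of_ne_one {g : Coprod G H} (hg : g ≠ 1) : coprodDelta g = 0 := if_neg hg

/-- The shear of `(G ∗ H) × ZMod 2` along the indicator function of the identity. -/
noncomputable def coprodShear : Equiv.Perm (Coprod G H × ZMod 2) :=
  Equiv.prodShear (Equiv.refl _) fun g => Equiv.addRight (coprodDelta g)

/-- The action on `(G ∗ H) × ZMod 2` in which `G` acts by right translations and `H` by right
translations conjugated by the shear along the indicator function of the identity. -/
noncomputable def coprodTwistedTranslation :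
    Coprod G H →* Equiv.Perm (Coprod G H × ZMod 2) :=
  Coprod.lift (coprodTranslation.comp inl)
    ((MulAut.conj coprodShear).toMonoidHom.comp (coprodTranslation.comp inr))

/-- The almost invariant function on a free product with value `1` at the identity which is right
invariant under the first factor, and under the second one changes only when entering or leaving
the identity. -/
noncomputable def coprodJump (g : Coprod G H) : ZMod 2 := (coprodTwistedTranslation g⁻¹ (1, 1)).2

theorem coprodTwistedTranslation_inl (k : G) (x : Coprod G H × ZMod 2) :
    coprodTwistedTranslation (inl k) x = (x.1 * (inl k)⁻¹, x.2) := by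
  rw [coprodTwistedTranslation, lift_apply_inl]
  rfl

theorem coprodTwistedTranslation_inr (k : H) (x : Coprod G H × ZMod 2) :
    coprodTwistedTranslation (inr k) x =
      (x.1 * (inr k)⁻¹, x.2 - coprodDelta x.1 + coprodDelta (x.1 * (inr k)⁻¹)) := by
  rw [coprodTwistedTranslation, lift_apply_inr, sub_eq_add_neg]
  rfl

theorem coprodTwistedTranslation_fst (g : Coprod G H) (x : Coprod G H × ZMod 2) :
    (coprodTwistedTranslation g x).1 = x.1 * g⁻¹ := by
  induction g using Monoid.Coprod.induction_on generalizing x with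
  | inl k => rw [coprodTwistedTranslation_inl]
  | inr k => rw [coprodTwistedTranslation_inr]
  | mul g h ihg ihh => rw [map_mul, Equiv.Perm.mul_apply, ihg, ihh, mul_inv_rev, mul_assoc]

theorem coprodJump_one : coprodJump (1 : Coprod G H) = 1 := by
  rw [coprodJump, inv_one, map_one, Equiv.Perm.one_apply]

theorem coprodJump_mul_inl (g : Coprod G H) (k : G) : coprodJump (g * inl k) = coprodJump g := by
  rw [coprodJump, mul_inv_rev, map_mul, Equiv.Perm.mul_apply, ← map_inv,
    coprodTwistedTranslation_inl, coprodJump]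

theorem coprodJump_mul_inr (g : Coprod G H) (k : H) :
    coprodJump (g * inr k) = coprodJump g - coprodDelta g + coprodDelta (g * inr k) := by
  rw [coprodJump, mul_inv_rev, map_mul, Equiv.Perm.mul_apply, ← map_inv,
    coprodTwistedTranslation_inr, coprodTwistedTranslation_fst, inv_inv, one_mul, map_inv, inv_inv,
    coprodJump]

theorem isAlmostInvariant_coprodJump :
    IsAlmostInvariant (coprodJump : Coprod G H → ZMod 2) := by
  intro k
  induction k using Monoid.Coprod.induction_on with
  | inl k => simp only [coprodJump_mul_inl, ne_eq, not_true_eq_false, ofPred_false, finite_empty]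
  | inr k =>
    refine (Set.toFinite {1, (inr k)⁻¹}).subset fun g hg => ?_
    by_contra hne
    rw [mem_insert_iff, mem_singleton_iff, not_or, ← mul_eq_one_iff_eq_inv] at hne
    refine hg ?_
    rw [coprodJump_mul_inr, coprodDelta_of_ne_one hne.1, coprodDelta_of_ne_one hne.2,
      sub_zero, add_zero]
  | mul k l ihk ihl =>
    refine (ihk.union (ihl.preimage (mul_left_injective k).injOn)).subset fun g hg => ?_
    by_contra hne
    simp only [mem_union, mem_preimage, mem_ofPred_eq, not_or, not_not] at hne
    exact hg (by rw [← mul_assoc, hne.2, hne.1])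

variable {a : G} {b : H}

theorem not_commute_inl_inr (ha : a ≠ 1) (hb : b ≠ 1) :
    ¬ Commute (inl a : Coprod G H) (inr b) := by
  have ha' : (inl a : Coprod G H) ≠ 1 := (map_ne_one_iff _ inl_injective).2 ha
  have hb' : (inr b : Coprod G H) ≠ 1 := (map_ne_one_iff _ inr_injective).2 hb
  have hab : (inl a * inr b : Coprod G H) ≠ 1 := fun h => ha (by
    simpa only [map_mul, fst_apply_inl, fst_apply_inr, mul_one, map_one] using congrArg fst h)
  have hjump_inl : coprodJump (inl a : Coprod G H) = 1 := by
    rw [← one_mul (inl a), coprodJump_mul_inl, coprodJump_one]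
  have hjump_inr : coprodJump (inr b : Coprod G H) = 0 := by
    rw [← one_mul (inr b), coprodJump_mul_inr, coprodJump_one, one_mul, coprodDelta_one,
      coprodDelta_of_ne_one hb', sub_self, add_zero]
  intro h
  have hjump := congrArg coprodJump h.eq
  rw [coprodJump_mul_inl, coprodJump_mul_inr, hjump_inl, hjump_inr, coprodDelta_of_ne_one ha',
    coprodDelta_of_ne_one hab, sub_zero, add_zero] at hjump
  exact one_ne_zero hjump

theorem zpow_mul_inl_ne_one (ha : a ≠ 1) (hb : b ≠ 1) (n : ℤ) :
    (inl a * inr b : Coprod G H) ^ n * inl a ≠ 1 := by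
  intro h
  have hcomm : Commute (inl a : Coprod G H) (inl a * inr b) := by
    have := ((Commute.refl (inl a * inr b : Coprod G H)).zpow_left n).inv_left
    rwa [← eq_inv_of_mul_eq_one_right h] at this
  refine not_commute_inl_inr ha hb ?_
  rw [← inv_mul_cancel_left (inl a) (inr b : Coprod G H)]
  exact (Commute.refl (inl a : Coprod G H)).inv_right.mul_right hcomm

theorem coprodJump_zpow_add_one (ha : a ≠ 1) (hb : b ≠ 1) (n : ℤ) :
    coprodJump ((inl a * inr b : Coprod G H) ^ (n + 1)) =
      coprodJump ((inl a * inr b : Coprod G H) ^ n) +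
        coprodDelta ((inl a * inr b : Coprod G H) ^ (n + 1)) := by
  rw [zpow_add_one, ← mul_assoc, coprodJump_mul_inr, coprodJump_mul_inl,
    coprodDelta_of_ne_one (zpow_mul_inl_ne_one ha hb n), sub_zero]

theorem coprodJump_pow (ha : a ≠ 1) (hb : b ≠ 1) {n : ℕ}
    (h : ∀ k, 0 < k → k ≤ n → (inl a * inr b : Coprod G H) ^ k ≠ 1) :
    coprodJump ((inl a * inr b : Coprod G H) ^ n) = 1 := by
  induction n with
  | zero => rw [pow_zero, coprodJump_one]
  | succ n ih =>
    have hstep := coprodJump_zpow_add_one ha hb n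
    rwa [← Nat.cast_add_one, zpow_natCast, zpow_natCast,
      coprodDelta_of_ne_one (h _ n.succ_pos le_rfl), add_zero,
      ih fun k hk hkn => h k hk (hkn.trans n.le_succ)] at hstep

theorem not_isOfFinOrder_inl_mul_inr (ha : a ≠ 1) (hb : b ≠ 1) :
    ¬ IsOfFinOrder (inl a * inr b : Coprod G H) := by
  intro h
  obtain ⟨n, hn⟩ := Nat.exists_eq_add_one.2 h.orderOf_pos
  have hjump := coprodJump_pow (n := n) ha hb fun k hk hkn =>
    pow_ne_one_of_lt_orderOf hk.ne' (by lia)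
  have hstep := coprodJump_zpow_add_one ha hb n
  rw [← Nat.cast_add_one, zpow_natCast, zpow_natCast, hjump, ← hn, pow_orderOf_eq_one,
    coprodJump_one, coprodDelta_one, left_eq_add] at hstep
  exact one_ne_zero hstep

theorem separatesEnds_coprodJump (ha : a ≠ 1) (hb : b ≠ 1) :
    SeparatesEnds coprodJump (inl a * inr b : Coprod G H) where
  isAlmostInvariant := isAlmostInvariant_coprodJump
  zpow_of_nonneg n hn := by
    lift n to ℕ using hn
    rw [zpow_natCast]
    exact coprodJump_pow ha hb fun k hk _ hk1 =>
      not_isOfFinOrder_inl_mul_inr ha hb (isOfFinOrder_iff_pow_eq_one.2 ⟨k, hk, hk1⟩)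
  zpow_of_neg n hn := by
    have hinj := injective_zpow_iff_not_isOfFinOrder.2 (not_isOfFinOrder_inl_mul_inr ha hb)
    induction n, Int.le_sub_one_of_lt hn using Int.leInductionDown with
    | base =>
      have hstep := coprodJump_zpow_add_one ha hb (-1)
      rw [neg_add_cancel, zpow_zero, coprodJump_one, coprodDelta_one] at hstep
      exact left_eq_add.1 (hstep.trans (add_comm _ _))
    | pred n hn ih =>
      have hstep := coprodJump_zpow_add_one ha hb (n - 1)
      rw [sub_add_cancel, ih (by lia), coprodDelta_of_ne_one, add_zero] at hstep
      · exact hstep.symm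
      · rw [← zpow_zero (inl a * inr b)]
        exact hinj.ne (by lia)

end Coprod

/-! ### The universal covering of a surface -/

section LocallyPlane

variable {X Y Z : Type*} [TopologicalSpace X] [TopologicalSpace Y] [TopologicalSpace Z]

theorem isOpenEmbedding_symm_comp (e : OpenPartialHomeomorph X Y) {f : Z → Y}
    (hf : IsOpenEmbedding f) (h : range f ⊆ e.target) : IsOpenEmbedding (e.symm ∘ f) := by
  have hf_target (z : Z) : f z ∈ e.target := h (mem_range_self z)
  refine .of_continuous_injective_isOpenMap ?_ ?_ fun U hU => ?_
  · exact continuous_iff_continuousAt.2 fun z =>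
      (e.continuousAt_symm (hf_target z)).comp hf.continuous.continuousAt
  · exact fun z w hzw => hf.injective (e.symm.injOn (hf_target z) (hf_target w) hzw)
  · rw [image_comp]
    exact e.isOpen_image_symm_of_subset_target (hf.isOpenMap U hU)
      ((image_subset_range f U).trans h)

namespace LocallyPlane

theorem of_openPartialHomeomorph [LocallyPlane Y]
    (h : ∀ x : X, ∃ e : OpenPartialHomeomorph X Y, x ∈ e.source) : LocallyPlane X where
  exists_isOpenEmbedding x := by
    obtain ⟨e, hx⟩ := h x
    obtain ⟨f, hf, hf0, hfe⟩ := exists_range_subset (e.open_target.mem_nhds (e.map_source hx))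
    exact ⟨e.symm ∘ f, isOpenEmbedding_symm_comp e hf hfe, by
      rw [Function.comp_apply, hf0, e.left_inv hx]⟩

theorem of_isLocalHomeomorph [LocallyPlane Y] {p : X → Y} (hp : IsLocalHomeomorph p) :
    LocallyPlane X :=
  of_openPartialHomeomorph fun x => (hp x).imp fun _ he => he.1

theorem of_chartedSpace (Y : Type*) [TopologicalSpace Y] [LocallyPlane Y] [ChartedSpace Y X] :
    LocallyPlane X :=
  of_openPartialHomeomorph fun x => ⟨chartAt Y x, mem_chart_source Y x⟩

instance : LocallyPlane (EuclideanSpace ℝ (Fin 2)) :=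
  of_isLocalHomeomorph
    Complex.orthonormalBasisOneI.repr.toHomeomorph.symm.isLocalHomeomorph

end LocallyPlane

end LocallyPlane

section PathQuotient

open Path.Homotopic.Quotient

variable {X : Type*} [TopologicalSpace X] {x y z : X}

theorem homotopyClass_trans_symm_trans (p : Path.Homotopic.Quotient x y)
    (q : Path.Homotopic.Quotient x z) : p.trans (p.symm.trans q) = q := by
  rw [← trans_assoc, trans_symm, refl_trans]

theorem homotopyClass_trans_left_injective (p : Path.Homotopic.Quotient x y) :
    Function.Injective (p.trans : Path.Homotopic.Quotient y z → _) :=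
  Function.LeftInverse.injective (g := p.symm.trans) fun q => by
    rw [← trans_assoc, symm_trans, refl_trans]

theorem homotopyClass_trans_right_injective (r : Path.Homotopic.Quotient y z) :
    Function.Injective fun p : Path.Homotopic.Quotient x y => p.trans r :=
  Function.LeftInverse.injective (g := fun p => p.trans r.symm) fun p => by
    simp only [trans_assoc, trans_symm, trans_refl]

theorem eventually_exists_path [LocallyPathConnectedSpace X] {V : Set X} (hV : V ∈ 𝓝 y) :
    ∀ᶠ z in 𝓝 y, ∃ γ : Path y z, ∀ t, γ t ∈ V := by
  obtain ⟨W, ⟨hW, hWc⟩, hWV⟩ := (path_connected_basis y).mem_iff.1 hV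
  filter_upwards [hW] with z hz
  have h := hWc.joinedIn y (mem_of_mem_nhds hW) z hz
  exact ⟨h.somePath, fun t => hWV (h.somePath_mem t)⟩

end PathQuotient

/-- An open cover, indexed by the points of the space, by path-connected sets in which any two
paths with the same end points are homotopic in the ambient space. It is the input for the
construction of the universal covering. -/
structure SimpleCover (X : Type*) [TopologicalSpace X] where
  nbhd : X → Set X
  isOpen_nbhd : ∀ i, IsOpen (nbhd i)
  mem_nbhd : ∀ i, i ∈ nbhd i
  isPathConnected_nbhd : ∀ i, IsPathConnected (nbhd i)
  homotopic : ∀ i ⦃a b : X⦄ (γ γ' : Path a b), (∀ t, γ t ∈ nbhd i) → (∀ t, γ' t ∈ nbhd i) →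
    γ.Homotopic γ'

namespace SimpleCover

open Path.Homotopic.Quotient

variable {X : Type*} [TopologicalSpace X] [PathConnectedSpace X] (𝒰 : SimpleCover X) (s : X)

open Classical in
/-- The class of a path from `y` to the base point which first runs inside `𝒰.nbhd i` to `i` and
then follows a path depending only on `i`. The value for `y ∉ 𝒰.nbhd i` is immaterial. -/
noncomputable def toBase (i y : X) : Path.Homotopic.Quotient y s :=
  if h : y ∈ 𝒰.nbhd i then
    (Path.Homotopic.Quotient.mk
      ((𝒰.isPathConnected_nbhd i).joinedIn y h i (𝒰.mem_nbhd i)).somePath).trans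
      (Path.Homotopic.Quotient.mk (PathConnectedSpace.somePath i s))
  else Path.Homotopic.Quotient.mk (PathConnectedSpace.somePath y s)

theorem toBase_eq_trans {i y z : X} (γ : Path y z) (hγ : ∀ t, γ t ∈ 𝒰.nbhd i) :
    𝒰.toBase s i y = (Path.Homotopic.Quotient.mk γ).trans (𝒰.toBase s i z) := by
  have hy : y ∈ 𝒰.nbhd i := γ.source ▸ hγ 0
  have hz : z ∈ 𝒰.nbhd i := γ.target ▸ hγ 1
  let δ := (𝒰.isPathConnected_nbhd i).joinedIn z hz i (𝒰.mem_nbhd i)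
  rw [toBase, toBase, dif_pos hy, dif_pos hz, ← trans_assoc, ← mk_trans γ]
  congr 1
  refine Path.Homotopic.Quotient.eq.2 (𝒰.homotopic i _ _ (JoinedIn.somePath_mem _) fun t => ?_)
  have ht : γ.trans δ.somePath t ∈ range γ ∪ range δ.somePath :=
    (γ.trans_range δ.somePath).subset (mem_range_self t)
  rcases ht with ⟨u, hu⟩ | ⟨u, hu⟩
  · exact hu ▸ hγ u
  · exact hu ▸ δ.somePath_mem u

/-- The transition functions of the universal covering. -/
noncomputable def transition (i j y : X) : FundamentalGroup X s :=
  FundamentalGroup.fromPath ((𝒰.toBase s j y).symm.trans (𝒰.toBase s i y))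

theorem toBase_trans_transition (i j y : X) :
    (𝒰.toBase s j y).trans (𝒰.transition s i j y).toPath = 𝒰.toBase s i y :=
  homotopyClass_trans_symm_trans _ _

theorem transition_mul_transition (i j k y : X) :
    𝒰.transition s i j y * 𝒰.transition s j k y = 𝒰.transition s i k y := by
  refine homotopyClass_trans_left_injective (𝒰.toBase s k y) ?_
  calc (𝒰.toBase s k y).trans
        ((𝒰.transition s j k y).toPath.trans (𝒰.transition s i j y).toPath)
    _ = 𝒰.toBase s i y := by
      rw [← trans_assoc, toBase_trans_transition, toBase_trans_transition]
    _ = (𝒰.toBase s k y).trans (𝒰.transition s i k y).toPath :=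
      (𝒰.toBase_trans_transition s i k y).symm

variable [LocallyPathConnectedSpace X]

theorem eventually_transition_eq (i j : X) {y : X} (hy : y ∈ 𝒰.nbhd i ∩ 𝒰.nbhd j) :
    ∀ᶠ z in 𝓝 y, 𝒰.transition s i j z = 𝒰.transition s i j y := by
  filter_upwards [eventually_exists_path
    (((𝒰.isOpen_nbhd i).inter (𝒰.isOpen_nbhd j)).mem_nhds hy)] with z ⟨γ, hγ⟩
  refine homotopyClass_trans_left_injective (𝒰.toBase s j y) ?_
  calc (𝒰.toBase s j y).trans (𝒰.transition s i j z).toPath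
    _ = (Path.Homotopic.Quotient.mk γ).trans (𝒰.toBase s i z) := by
      rw [𝒰.toBase_eq_trans s γ fun t => (hγ t).2, trans_assoc, toBase_trans_transition]
    _ = (𝒰.toBase s j y).trans (𝒰.transition s i j y).toPath := by
      rw [toBase_trans_transition, ← 𝒰.toBase_eq_trans s γ fun t => (hγ t).1]

/-- The cocycle defining the universal covering. -/
noncomputable def cocycle : LocallyConstantCocycle X X (FundamentalGroup X s) where
  baseSet := 𝒰.nbhd
  isOpen_baseSet := 𝒰.isOpen_nbhd
  indexAt := id
  mem_baseSet_at := 𝒰.mem_nbhd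
  transition := 𝒰.transition s
  eventually_transition_eq i j _ hy := 𝒰.eventually_transition_eq s i j hy
  transition_mul_transition i j k y _ := 𝒰.transition_mul_transition s i j k y

variable [TopologicalSpace (FundamentalGroup X s)] [DiscreteTopology (FundamentalGroup X s)]
  {𝒰 s} {x y : (𝒰.cocycle s).Cover}

/-- The class of paths to the base point encoded by a point of the universal covering. -/
noncomputable def label (x : (𝒰.cocycle s).Cover) :
    Path.Homotopic.Quotient ((𝒰.cocycle s).proj x) s :=
  (𝒰.toBase s ((𝒰.cocycle s).proj x) ((𝒰.cocycle s).proj x)).trans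
    ((𝒰.cocycle s).coord ((𝒰.cocycle s).proj x) x).toPath

theorem label_eq {i : X} (hx : (𝒰.cocycle s).proj x ∈ 𝒰.nbhd i) : label x =
    (𝒰.toBase s i ((𝒰.cocycle s).proj x)).trans ((𝒰.cocycle s).coord i x).toPath := by
  set b := (𝒰.cocycle s).proj x
  have hcoord : (𝒰.cocycle s).coord b x =
      ((𝒰.transition s i b b).toPath.trans ((𝒰.cocycle s).coord i x).toPath) :=
    LocallyConstantCocycle.coord_eq_mul_transition ⟨hx, 𝒰.mem_nbhd b⟩
  calc label x
    _ = (𝒰.toBase s b b).trans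
        ((𝒰.transition s i b b).toPath.trans ((𝒰.cocycle s).coord i x).toPath) :=
      congrArg _ hcoord
    _ = (𝒰.toBase s i b).trans ((𝒰.cocycle s).coord i x).toPath := by
      rw [← trans_assoc, toBase_trans_transition]

theorem simplyConnectedSpace_unitInterval : SimplyConnectedSpace unitInterval :=
  have : ContractibleSpace unitInterval :=
    (convex_Icc 0 1).contractibleSpace ⟨0, left_mem_Icc.2 zero_le_one⟩
  inferInstance

theorem locallyPathConnectedSpace_unitInterval : LocallyPathConnectedSpace unitInterval :=
  (isQuotientMap_projIcc (a := (0 : ℝ)) (b := 1) (h := zero_le_one)).locallyPathConnectedSpace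

theorem eventually_label_eq_trans {Z : Type*} [TopologicalSpace Z] [LocallyPathConnectedSpace Z]
    (F : C(Z, (𝒰.cocycle s).Cover)) (t : Z) :
    ∀ᶠ u in 𝓝 t, ∃ γ : Path t u, label (F t) = (Path.Homotopic.Quotient.mk
      (γ.map ((𝒰.cocycle s).core.continuous_proj.comp F.continuous))).trans (label (F u)) := by
  let i := (𝒰.cocycle s).proj (F t)
  have hF : Continuous fun u => (𝒰.cocycle s).proj (F u) :=
    (𝒰.cocycle s).core.continuous_proj.comp F.continuous
  have hcoord : ∀ᶠ u in 𝓝 t, (𝒰.cocycle s).coord i (F u) = (𝒰.cocycle s).coord i (F t) :=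
    F.continuous.continuousAt.eventually
      (LocallyConstantCocycle.eventually_coord_eq (𝒰.mem_nbhd i))
  have hmem : (fun u => (𝒰.cocycle s).proj (F u)) ⁻¹' 𝒰.nbhd i ∈ 𝓝 t :=
    hF.continuousAt.preimage_mem_nhds ((𝒰.isOpen_nbhd i).mem_nhds (𝒰.mem_nbhd i))
  filter_upwards [hcoord, eventually_exists_path hmem, hmem] with u hu ⟨γ, hγ⟩ hui
  refine ⟨γ, ?_⟩
  rw [label_eq (𝒰.mem_nbhd i), label_eq hui, 𝒰.toBase_eq_trans s (γ.map hF) hγ, hu, trans_assoc]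

theorem label_eq_map_trans {Z : Type*} [TopologicalSpace Z] [SimplyConnectedSpace Z]
    [LocallyPathConnectedSpace Z] (F : C(Z, (𝒰.cocycle s).Cover)) {a b : Z} (γ : Path a b) :
    label (F a) = (Path.Homotopic.Quotient.mk
      (γ.map ((𝒰.cocycle s).core.continuous_proj.comp F.continuous))).trans (label (F b)) := by
  let p : C(Z, X) := ⟨_, (𝒰.cocycle s).core.continuous_proj.comp F.continuous⟩
  let toPoint (u : Z) : Path.Homotopic.Quotient a u := .mk (PathConnectedSpace.somePath a u)
  have hconst : IsLocallyConstant fun u => ((toPoint u).map p).trans (label (F u)) := by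
    refine (IsLocallyConstant.iff_eventually_eq _).2 fun u => ?_
    filter_upwards [eventually_label_eq_trans F u] with v ⟨δ, hδ⟩
    have hv : toPoint v = .mk ((PathConnectedSpace.somePath a u).trans δ) :=
      Subsingleton.elim _ _
    rw [hδ, ← trans_assoc, hv, ← mk_map, ← mk_map, Path.map_trans, mk_trans]
  have h := hconst.apply_eq_of_preconnectedSpace a b
  have ha : toPoint a = .refl a := Subsingleton.elim _ _
  have hb : toPoint b = .mk γ := Subsingleton.elim _ _
  rw [ha, hb] at h
  exact (refl_trans _).symm.trans h

theorem label_eq_trans (Γ : Path x y) :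
    label x = (Path.Homotopic.Quotient.mk (Γ.map (𝒰.cocycle s).core.continuous_proj)).trans
      (label y) := by
  have := simplyConnectedSpace_unitInterval
  have := locallyPathConnectedSpace_unitInterval
  obtain ⟨F, rfl, rfl⟩ := Γ
  exact label_eq_map_trans F (a := 0) (b := 1) ⟨.id _, rfl, rfl⟩

theorem joined_of_label_eq_trans
    (γ : Path.Homotopic.Quotient ((𝒰.cocycle s).proj x) ((𝒰.cocycle s).proj y))
    (h : label x = γ.trans (label y)) : Joined x y := by
  obtain ⟨γ, rfl⟩ := Path.Homotopic.Quotient.mk_surjective γ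
  obtain ⟨Γ, hΓ, hΓ0⟩ :=
    LocallyConstantCocycle.isCoveringMap_proj.exists_path_lifts γ x γ.source
  obtain ⟨b, g⟩ := y
  obtain ⟨⟨b', g'⟩, hΓ1⟩ : ∃ z, Γ 1 = z := ⟨_, rfl⟩
  obtain rfl : b' = b := by
    have hb := congrFun hΓ 1
    rw [Function.comp_apply, hΓ1] at hb
    exact hb.trans γ.target
  let Γ' : Path x ⟨b', g'⟩ := ⟨Γ, hΓ0, hΓ1⟩
  have hproj : Γ'.map (𝒰.cocycle s).core.continuous_proj = γ := Path.ext hΓ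
  have hlabel := (label_eq_trans Γ').symm.trans h
  rw [hproj] at hlabel
  have hcoord : (𝒰.cocycle s).coord b' ⟨b', g'⟩ = (𝒰.cocycle s).coord b' ⟨b', g⟩ :=
    homotopyClass_trans_left_injective _ (homotopyClass_trans_left_injective _ hlabel)
  have hb' : (𝒰.cocycle s).proj ⟨b', g'⟩ ∈ (𝒰.cocycle s).baseSet b' := 𝒰.mem_nbhd b'
  have hg : (⟨b', g'⟩ : (𝒰.cocycle s).Cover) = ⟨b', g⟩ :=
    LocallyConstantCocycle.eq_of_coord_eq hb' rfl hcoord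
  exact hg ▸ ⟨Γ'⟩

variable (𝒰 s) in
theorem simplyConnectedSpace_cover : SimplyConnectedSpace (𝒰.cocycle s).Cover := by
  rw [simply_connected_iff_paths_homotopic]
  refine ⟨⟨?_, fun x y => ?_⟩, fun x y => ⟨fun γ γ' => ?_⟩⟩
  · exact ⟨(LocallyConstantCocycle.surjective_proj s).choose⟩
  · exact joined_of_label_eq_trans ((label x).trans (label y).symm)
      (by rw [trans_assoc, symm_trans, trans_refl])
  · refine LocallyConstantCocycle.isCoveringMap_proj.injective_path_homotopic_map x y ?_
    obtain ⟨γ, rfl⟩ := Path.Homotopic.Quotient.mk_surjective γ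
    obtain ⟨γ', rfl⟩ := Path.Homotopic.Quotient.mk_surjective γ'
    exact homotopyClass_trans_right_injective (label y)
      ((label_eq_trans γ).symm.trans (label_eq_trans γ'))

end SimpleCover

namespace LocallyPlane

variable {X : Type*} [TopologicalSpace X]

theorem exists_path_map_eq {Z : Type*} [TopologicalSpace Z] {f : Z → X} (hf : IsEmbedding f)
    {z w : Z} (γ : Path (f z) (f w)) (hγ : ∀ t, γ t ∈ range f) :
    ∃ γ' : Path z w, γ'.map hf.continuous = γ := by
  choose u hu using hγ
  have hcont : Continuous u :=
    hf.continuous_iff.2 (γ.continuous.congr fun t => (hu t).symm)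
  exact ⟨⟨⟨u, hcont⟩, hf.injective ((hu 0).trans γ.source), hf.injective ((hu 1).trans γ.target)⟩,
    Path.ext (funext hu)⟩

theorem nonempty_simpleCover [LocallyPlane X] : Nonempty (SimpleCover X) := by
  choose f hf hf0 using exists_isOpenEmbedding (X := X)
  refine ⟨⟨fun i => range (f i), fun i => (hf i).isOpen_range, fun i => ⟨0, hf0 i⟩,
    fun i => isPathConnected_range (hf i).continuous, fun i a b γ γ' hγ hγ' => ?_⟩⟩
  obtain ⟨z, rfl⟩ : a ∈ range (f i) := γ.source ▸ hγ 0
  obtain ⟨w, rfl⟩ : b ∈ range (f i) := γ.target ▸ hγ 1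
  obtain ⟨γ, rfl⟩ := exists_path_map_eq (hf i).isEmbedding γ hγ
  obtain ⟨γ', rfl⟩ := exists_path_map_eq (hf i).isEmbedding γ' hγ'
  exact (SimplyConnectedSpace.paths_homotopic γ γ').map ⟨f i, (hf i).continuous⟩

theorem not_separatesEnds_fundamentalGroup [LocallyPlane X] [CompactSpace X] [ConnectedSpace X]
    [T2Space X] {s : X} (e : FundamentalGroup X s → ZMod 2) (t : FundamentalGroup X s) :
    ¬ SeparatesEnds e t := by
  have : PathConnectedSpace X := pathConnectedSpace_iff_connectedSpace.2 inferInstance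
  let _ : TopologicalSpace (FundamentalGroup X s) := ⊥
  have : DiscreteTopology (FundamentalGroup X s) := ⟨rfl⟩
  obtain ⟨𝒰⟩ := nonempty_simpleCover (X := X)
  let c := 𝒰.cocycle s
  have hp : IsCoveringMap c.proj := LocallyConstantCocycle.isCoveringMap_proj
  have : SimplyConnectedSpace c.Cover := 𝒰.simplyConnectedSpace_cover s
  have : LocallyPlane c.Cover := of_isLocalHomeomorph hp.isLocalHomeomorph
  have : ProperlyDiscontinuousSMul (FundamentalGroup X s) c.Cover :=
    properlyDiscontinuousSMul_of_exists_nhds LocallyConstantCocycle.exists_nhds_finite_smul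
  obtain ⟨C, hC, hCX⟩ := exists_isCompact_image_eq_univ
    (IsOpenQuotientMap.mk c.surjective_proj hp.continuous hp.isLocalHomeomorph.isOpenMap)
  refine AlexanderSpanier.not_separatesEnds hC (fun x => ?_) e t
  obtain ⟨y, hy, hyx⟩ : c.proj x ∈ c.proj '' C := by rw [hCX]; exact mem_univ _
  obtain ⟨g, hg⟩ := LocallyConstantCocycle.exists_smul_eq hyx
  exact ⟨g, y, hy, hg⟩

end LocallyPlane

open Monoid.Coprod in
theorem fundamentalGroup_closedSurface_not_free_product_general
    {S : Type*} [TopologicalSpace S] [CompactSpace S] [ConnectedSpace S] [T2Space S]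
    [ChartedSpace (EuclideanSpace ℝ (Fin 2)) S] {s : S} {G H : Type*} [Group G] [Group H]
    {φ : FundamentalGroup S s →* Monoid.Coprod G H} (hφ : Function.Injective φ)
    {a : G} {b : H} (ha : a ≠ 1) (hb : b ≠ 1) : inl a * inr b ∉ φ.range := by
  rintro ⟨t, ht⟩
  have : LocallyPlane S := .of_chartedSpace (EuclideanSpace ℝ (Fin 2))
  have hab := separatesEnds_coprodJump ha hb
  rw [← ht] at hab
  exact LocallyPlane.not_separatesEnds_fundamentalGroup _ t (hab.comp hφ)

/-- The fundamental group of a closed surface is not isomorphic to a free product of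
two non-trivial groups. -/
theorem fundamentalGroup_closedSurface_not_free_product
    (S : Type) [TopologicalSpace S] [CompactSpace S] [ConnectedSpace S] [T2Space S]
    [ChartedSpace (EuclideanSpace ℝ (Fin 2)) S] (s : S)
    (G H : Type) [Group G] [Group H] [Nontrivial G] [Nontrivial H] :
    IsEmpty (FundamentalGroup S s ≃* Monoid.Coprod G H) := by
  obtain ⟨a, ha⟩ := exists_ne (1 : G)
  obtain ⟨b, hb⟩ := exists_ne (1 : H)
  exact ⟨fun φ => fundamentalGroup_closedSurface_not_free_product_general
    (φ := φ.toMonoidHom) φ.injective ha hb (φ.surjective _)⟩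
end

section
/- Let X be a path-connected, locally simply connected metric space containing a local cut point that is not a cut point. Then there exists a group G such that π₁(X) is isomorphic to G * ℤ. -/
/-- Locally simply connected: every point has arbitrarily small simply connected
open neighborhoods. -/
def LocSimplyConnected (X : Type) [TopologicalSpace X] : Prop :=
  ∀ x : X, ∀ U ∈ nhds x, ∃ V ∈ nhds x, V ⊆ U ∧ IsOpen V ∧ SimplyConnectedSpace ↥V

/-- A cut point of a connected space: removing it disconnects the space. -/
def IsCutPoint (X : Type) [TopologicalSpace X] (x : X) : Prop :=
  ¬ IsPreconnected ({x}ᶜ : Set X)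

/-- A local cut point: it disconnects some connected open neighborhood of itself. -/
def IsLocalCutPoint (X : Type) [TopologicalSpace X] (x : X) : Prop :=
  ∃ U : Set X, IsOpen U ∧ x ∈ U ∧ IsConnected U ∧ ¬ IsPreconnected (U \ {x})

/-!
Write `Γ` for the fundamental group at the local cut point `x`. For a group `K`, each `k : K` twists
a homomorphism `Γ →* K` by inserting `k` whenever a loop passes through `x` into one chosen side of
`x`. This is an action of `K` on `Γ →* K`, natural in `K`. Since `x` is not a cut point, some loop
`t` passes through `x` only once, so that the twist by `k` multiplies the value at `t` by `k`. Hence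
every homomorphism `Γ →* K` is, for a unique `k`, the twist by `k` of one which is trivial at `t`,
so that `Γ` represents the same functor of `K` as the free product of `Γ ⧸ ⟨⟨t⟩⟩` and `ℤ`.

To see that a twist exists, regard homomorphisms as functors on the fundamental groupoid. The twist
is prescribed on `{x}ᶜ` and on a small neighbourhood of `x`, and the two prescriptions are glued by
integrating along `I` for paths and along `I × I` for homotopies, which are simply connected.
-/

open Set Topology unitInterval

universe u

theorem nonempty_mulEquiv_coprod_int_of_natural_twist {Γ : Type u} [Group Γ] (t : Γ)
    (τ : ∀ {K : Type u} [Group K], K → (Γ →* K) → (Γ →* K))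
    (comp_τ : ∀ {K L : Type u} [Group K] [Group L] (ψ : K →* L) (k : K) (φ : Γ →* K),
      ψ.comp (τ k φ) = τ (ψ k) (ψ.comp φ))
    (τ_one : ∀ {K : Type u} [Group K] (φ : Γ →* K), τ 1 φ = φ)
    (τ_τ : ∀ {K : Type u} [Group K] (k l : K) (φ : Γ →* K), τ k (τ l φ) = τ (l * k) φ)
    (τ_apply : ∀ {K : Type u} [Group K] (k : K) (φ : Γ →* K), τ k φ t = φ t * k) :
    Nonempty (Γ ≃* Monoid.Coprod (Γ ⧸ Subgroup.normalClosure {t}) (Multiplicative ℤ)) := by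
  let N := Subgroup.normalClosure {t}
  let π : Γ →* Γ ⧸ N := QuotientGroup.mk' N
  have hπt : π t = 1 := (QuotientGroup.eq_one_iff t).2 (Subgroup.subset_normalClosure rfl)
  let ρ : Γ →* Γ := τ t⁻¹ (MonoidHom.id Γ)
  have hρ : N ≤ ρ.ker := Subgroup.normalClosure_le_normal <| singleton_subset_iff.2 <| by
    simp only [ρ, SetLike.mem_coe, MonoidHom.mem_ker, τ_apply, MonoidHom.id_apply, mul_inv_cancel]
  let ρ' : Γ ⧸ N →* Γ := QuotientGroup.lift N ρ hρ
  have hρ'π : ρ'.comp π = ρ := QuotientGroup.lift_comp_mk' N ρ hρ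
  let s : Monoid.Coprod (Γ ⧸ N) (Multiplicative ℤ) := Monoid.Coprod.inr (Multiplicative.ofAdd 1)
  let Ψ : Γ →* Monoid.Coprod (Γ ⧸ N) (Multiplicative ℤ) := τ s (Monoid.Coprod.inl.comp π)
  have hΨt : Ψ t = s := by simp only [Ψ, τ_apply, MonoidHom.comp_apply, hπt, map_one, one_mul]
  let Θ : Monoid.Coprod (Γ ⧸ N) (Multiplicative ℤ) →* Γ := Monoid.Coprod.lift ρ' (zpowersHom Γ t)
  have hΘs : Θ s = t := by
    simp only [Θ, s, Monoid.Coprod.lift_apply_inr, zpowersHom_apply, toAdd_ofAdd, zpow_one]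
  have hΘΨ : Θ.comp Ψ = MonoidHom.id Γ := by
    rw [comp_τ, hΘs, ← MonoidHom.comp_assoc, Monoid.Coprod.lift_comp_inl, hρ'π, τ_τ,
      inv_mul_cancel, τ_one]
  have hΨρ' : Ψ.comp ρ' = Monoid.Coprod.inl := by
    refine QuotientGroup.monoidHom_ext N ?_
    calc (Ψ.comp ρ').comp π = Ψ.comp ρ := by rw [MonoidHom.comp_assoc, hρ'π]
      _ = τ s⁻¹ Ψ := by rw [comp_τ, map_inv, hΨt, MonoidHom.comp_id]
      _ = Monoid.Coprod.inl.comp π := by rw [τ_τ, mul_inv_cancel, τ_one]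
  have hΨΘ : Ψ.comp Θ = MonoidHom.id _ := by
    refine Monoid.Coprod.hom_ext ?_ (MonoidHom.ext_mint ?_)
    · rw [MonoidHom.comp_assoc, Monoid.Coprod.lift_comp_inl, hΨρ', MonoidHom.id_comp]
    · change Ψ (Θ s) = s
      rw [hΘs, hΨt]
  exact ⟨Ψ.toMulEquiv Θ hΘΨ hΨΘ⟩

instance unitInterval_contractibleSpace : ContractibleSpace I :=
  (convex_Icc (0 : ℝ) 1).contractibleSpace ⟨0, unitInterval.zero_mem⟩

instance unitInterval_locallyPathConnectedSpace : LocallyPathConnectedSpace I :=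
  (convex_Icc (0 : ℝ) 1).locallyPathConnectedSpace

theorem eventually_joinedIn {Y : Type*} [TopologicalSpace Y] [LocallyPathConnectedSpace Y]
    {V : Set Y} {y : Y} (hV : V ∈ 𝓝 y) : ∀ᶠ z in 𝓝 y, JoinedIn V y z :=
  pathComponentIn_mem_nhds hV

theorem eq_of_eventually_eq_along_path {Y H : Type*} [TopologicalSpace Y] {d : Y → H} {y z : Y}
    (γ : Path y z) (hd : ∀ t, ∀ᶠ w in 𝓝 (γ t), d w = d (γ t)) : d y = d z := by
  have hloc : IsLocallyConstant (d ∘ γ) :=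
    (IsLocallyConstant.iff_eventually_eq _).2 fun t => γ.continuous.continuousAt.eventually (hd t)
  simpa using hloc.apply_eq_of_preconnectedSpace 0 1

theorem exists_eventually_inv_mul_eq_of_simplyConnected {Y H ι : Type*} [TopologicalSpace Y]
    [SimplyConnectedSpace Y] [LocallyPathConnectedSpace Y] [Group H] {V : ι → Set Y}
    (hV : ∀ i, IsOpen (V i)) (hcov : ∀ y, ∃ i, y ∈ V i) (e : ι → Y → H)
    (he : ∀ i j, ∀ y ∈ V i ∩ V j, ∀ᶠ z in 𝓝 y, (e j z)⁻¹ * e i z = (e j y)⁻¹ * e i y) :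
    ∃ c : Y → H, ∀ i, ∀ y ∈ V i, ∀ᶠ z in 𝓝 y, (e i z)⁻¹ * c z = (e i y)⁻¹ * c y := by
  choose ind mem_ind using hcov
  let _ : TopologicalSpace H := ⊥
  have : DiscreteTopology H := ⟨rfl⟩
  -- A section of the covering with fibre `H` and transition functions `e j⁻¹ * e i` is such a `c`.
  let Z : FiberBundleCore ι Y H :=
    { baseSet := V
      isOpen_baseSet := hV
      indexAt := ind
      mem_baseSet_at := mem_ind
      coordChange := fun i j y h => (e j y)⁻¹ * e i y * h
      coordChange_self := fun i y _ h => by rw [inv_mul_cancel, one_mul]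
      continuousOn_coordChange := fun i j => by
        rintro ⟨y, h⟩ ⟨hy, -⟩
        have hconst : ContinuousAt (fun z => (e j z)⁻¹ * e i z) y :=
          continuousAt_const.congr ((he i j y hy).mono fun z hz => hz.symm)
        exact ((hconst.comp (f := Prod.fst) (x := (y, h)) continuousAt_fst).mul
          continuousAt_snd).continuousWithinAt
      coordChange_comp := fun i j k y _ h => by group }
  have cov : IsCoveringMap (Bundle.TotalSpace.proj : Bundle.TotalSpace H Z.Fiber → Y) :=
    FiberBundle.isCoveringMap
  obtain ⟨y₀⟩ : Nonempty Y := inferInstance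
  obtain ⟨sec, ⟨-, hsec⟩, -⟩ :=
    cov.existsUnique_continuousMap_lifts (ContinuousMap.id Y) y₀ ⟨y₀, (1 : H)⟩ rfl
  have proj_sec : ∀ y, (sec y).proj = y := congrFun hsec
  let coord : Y → H := fun y => (sec y).snd
  let c : Y → H := fun y => e (ind y) y * coord y
  have localTriv_sec : ∀ i y, (Z.localTriv i (sec y)).2 = (e i y)⁻¹ * c y := fun i y => by
    change (e i (sec y).proj)⁻¹ * e (ind (sec y).proj) (sec y).proj * coord y = _
    rw [proj_sec, mul_assoc]
  refine ⟨c, fun i y hy => ?_⟩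
  have hcont : ContinuousAt (fun z => (Z.localTriv i (sec z)).2) y :=
    continuousAt_snd.comp (((Z.localTriv i).continuousAt
      ((Z.mem_localTriv_source i _).2 ((proj_sec y).symm ▸ hy))).comp sec.continuous.continuousAt)
  simp only [localTriv_sec] at hcont
  exact hcont.eventually (mem_nhds_discrete.2 (mem_singleton _))

/-- A holonomy assigns to every path an element of `H`, multiplicatively and up to homotopy; this
is a functor from the fundamental groupoid of `X` to the group `H`. The value on the path that is
run through first stands on the right. -/
@[ext]
structure Holonomy (X H : Type*) [TopologicalSpace X] [Group H] where
  toFun : ∀ {y z : X}, Path y z → H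
  map_trans : ∀ {y z w : X} (γ : Path y z) (δ : Path z w),
    toFun (γ.trans δ) = toFun δ * toFun γ
  map_homotopic : ∀ {y z : X} {γ δ : Path y z}, γ.Homotopic δ → toFun γ = toFun δ

namespace Holonomy

variable {X Y H K : Type*} [TopologicalSpace X] [TopologicalSpace Y] [Group H] [Group K]

instance : CoeFun (Holonomy X H) fun _ => ∀ {y z : X}, Path y z → H := ⟨Holonomy.toFun⟩

theorem map_refl (M : Holonomy X H) (y : X) : M (.refl y) = 1 := by
  have h := M.map_trans (.refl y) (.refl y)
  rwa [Path.refl_trans_refl, left_eq_mul] at h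

theorem map_symm (M : Holonomy X H) {y z : X} (γ : Path y z) : M γ.symm = (M γ)⁻¹ := by
  refine eq_inv_of_mul_eq_one_left ?_
  rw [← M.map_trans, ← M.map_homotopic ⟨Path.Homotopy.reflTransSymm γ⟩, M.map_refl]

/-- The image of a holonomy under a group homomorphism. -/
def map (φ : H →* K) (M : Holonomy X H) : Holonomy X K where
  toFun γ := φ (M γ)
  map_trans γ δ := by rw [M.map_trans, φ.map_mul]
  map_homotopic h := by rw [M.map_homotopic h]

/-- The change of a holonomy by a gauge transformation. -/
def gauge (g : X → H) (M : Holonomy X H) : Holonomy X H where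
  toFun {y z} γ := g z * M γ * (g y)⁻¹
  map_trans γ δ := by rw [M.map_trans]; group
  map_homotopic h := by rw [M.map_homotopic h]

/-- The holonomy with potential `c`. -/
def coboundary (c : X → H) : Holonomy X H where
  toFun {y z} _ := c z * (c y)⁻¹
  map_trans _ _ := by group
  map_homotopic _ := rfl

/-- The homomorphism on the fundamental group given by a holonomy. -/
noncomputable def toMonoidHom (x : X) (M : Holonomy X H) : FundamentalGroup X x →* H :=
  MonoidHom.mk' (Quotient.lift M.toFun fun _ _ => M.map_homotopic) fun γ δ => by
    induction γ using Path.Homotopic.Quotient.ind with | mk γ =>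
    induction δ using Path.Homotopic.Quotient.ind with | mk δ =>
    exact M.map_trans δ γ

theorem toMonoidHom_map (x : X) (φ : H →* K) (M : Holonomy X H) :
    (M.map φ).toMonoidHom x = φ.comp (M.toMonoidHom x) := by
  ext γ
  induction γ using Path.Homotopic.Quotient.ind with | mk γ =>
  rfl

theorem toMonoidHom_gauge {x : X} {g : X → H} (hg : g x = 1) (M : Holonomy X H) :
    (M.gauge g).toMonoidHom x = M.toMonoidHom x := by
  ext γ
  induction γ using Path.Homotopic.Quotient.ind with | mk γ =>
  change g x * M γ * (g x)⁻¹ = M γ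
  rw [hg, one_mul, inv_one, mul_one]

/-- The holonomy with values in the fundamental group which closes up a path by means of the
chosen paths `q` from the base point. -/
noncomputable def closeUp {x : X} (q : ∀ z, Path x z) : Holonomy X (FundamentalGroup X x) where
  toFun {y z} γ := FundamentalGroup.fromPath (.mk (((q y).trans γ).trans (q z).symm))
  map_trans {y z w} γ δ := by
    simp only [FundamentalGroup.mul_def, Path.Homotopic.Quotient.mk_trans,
      Path.Homotopic.Quotient.mk_symm, Path.Homotopic.Quotient.trans_assoc]
    rw [← Path.Homotopic.Quotient.trans_assoc _ (Path.Homotopic.Quotient.mk (q z)),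
      Path.Homotopic.Quotient.symm_trans, Path.Homotopic.Quotient.refl_trans]
  map_homotopic h := by
    simp only [Path.Homotopic.Quotient.mk_trans, Path.Homotopic.Quotient.eq.2 h]

theorem toMonoidHom_closeUp {x : X} {q : ∀ z, Path x z} (hq : (q x).Homotopic (.refl x)) :
    (closeUp q).toMonoidHom x = MonoidHom.id _ := by
  ext γ
  induction γ using Path.Homotopic.Quotient.ind with | mk γ =>
  change Path.Homotopic.Quotient.mk (((q x).trans γ).trans (q x).symm) = .mk γ
  simp only [Path.Homotopic.Quotient.mk_trans, Path.Homotopic.Quotient.mk_symm,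
    Path.Homotopic.Quotient.eq.2 hq]
  rw [← Path.Homotopic.Quotient.mk_symm, Path.refl_symm, Path.Homotopic.Quotient.mk_refl,
    Path.Homotopic.Quotient.refl_trans, Path.Homotopic.Quotient.trans_refl]

theorem map_closeUp {x : X} (q : ∀ z, Path x z) (M : Holonomy X H) :
    (closeUp q).map (M.toMonoidHom x) = M.gauge fun z => (M (q z))⁻¹ := by
  ext y z γ
  change M (((q y).trans γ).trans (q z).symm) = (M (q z))⁻¹ * M γ * ((M (q y))⁻¹)⁻¹
  rw [M.map_trans, M.map_trans, M.map_symm, inv_inv, mul_assoc]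

/-- Two holonomies agree on `U` if they have the same value on every path in `U`. -/
def EqOn (M N : Holonomy X H) (U : Set X) : Prop :=
  ∀ {y z : X} (γ : Path y z), (∀ t, γ t ∈ U) → M γ = N γ

theorem exists_eq_mul [SimplyConnectedSpace Y] (M : Holonomy Y H) :
    ∃ e : Y → H, ∀ {y z : Y} (γ : Path y z), e z = M γ * e y := by
  obtain ⟨y₀⟩ : Nonempty Y := inferInstance
  refine ⟨fun y => M (PathConnectedSpace.somePath y₀ y), fun γ => ?_⟩
  rw [← M.map_trans]
  exact M.map_homotopic (SimplyConnectedSpace.paths_homotopic _ _)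

/-- The pull-back of a holonomy under a continuous map. -/
def comap (f : C(Y, X)) (M : Holonomy X H) : Holonomy Y H where
  toFun γ := M (γ.map f.continuous)
  map_trans γ δ := by rw [Path.map_trans, M.map_trans]
  map_homotopic h := M.map_homotopic (h.map f)

end Holonomy

section Glue

variable {X H ι : Type*} [TopologicalSpace X] [Group H] {U : ι → Set X} {M : ι → Holonomy X H}

/-- A map `e` is a potential along `f : Y → X` of holonomies `M i`, given on the members `U i` of
a cover of `X`, if over `U i` it transforms by the pull-back of `M i`. -/
def IsPotentialAlong {Y : Type*} [TopologicalSpace Y] (U : ι → Set X) (M : ι → Holonomy X H)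
    (f : C(Y, X)) (e : Y → H) : Prop :=
  ∀ i {y z : Y} (γ : Path y z), (∀ t, f (γ t) ∈ U i) → e z = (M i).comap f γ * e y

theorem IsPotentialAlong.comp {Y Z : Type*} [TopologicalSpace Y] [TopologicalSpace Z]
    {f : C(Y, X)} {e : Y → H} (he : IsPotentialAlong U M f e) (g : C(Z, Y)) :
    IsPotentialAlong U M (f.comp g) (e ∘ g) :=
  fun i _ _ γ hγ => he i (γ.map g.continuous) hγ

theorem IsPotentialAlong.mul_inv_eq {Y : Type*} [TopologicalSpace Y] [PathConnectedSpace Y]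
    [LocallyPathConnectedSpace Y] (hU : ∀ i, IsOpen (U i)) (hcov : ∀ p, ∃ i, p ∈ U i)
    {f : C(Y, X)} {e e' : Y → H} (he : IsPotentialAlong U M f e)
    (he' : IsPotentialAlong U M f e') (y z : Y) : e z * (e y)⁻¹ = e' z * (e' y)⁻¹ := by
  have hconst : (e' y)⁻¹ * e y = (e' z)⁻¹ * e z := by
    refine eq_of_eventually_eq_along_path (d := fun w => (e' w)⁻¹ * e w)
      (PathConnectedSpace.somePath y z) fun t => ?_
    generalize PathConnectedSpace.somePath y z t = w
    obtain ⟨i, hi⟩ := hcov (f w)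
    filter_upwards [eventually_joinedIn (((hU i).preimage f.continuous).mem_nhds hi)]
      with v ⟨γ, hγ⟩
    rw [he i γ hγ, he' i γ hγ, mul_inv_rev, mul_assoc, inv_mul_cancel_left]
  rw [mul_inv_eq_iff_eq_mul, mul_assoc, hconst, mul_inv_cancel_left]

theorem exists_isPotentialAlong {Y : Type*} [TopologicalSpace Y] [SimplyConnectedSpace Y]
    [LocallyPathConnectedSpace Y] (hU : ∀ i, IsOpen (U i)) (hcov : ∀ p, ∃ i, p ∈ U i)
    (hM : ∀ i j, (M i).EqOn (M j) (U i ∩ U j))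
    (f : C(Y, X)) : ∃ e : Y → H, IsPotentialAlong U M f e := by
  choose e he using fun i => ((M i).comap f).exists_eq_mul
  have hV : ∀ i, IsOpen (f ⁻¹' U i) := fun i => (hU i).preimage f.continuous
  obtain ⟨c, hc⟩ := exists_eventually_inv_mul_eq_of_simplyConnected hV (fun y => hcov (f y)) e <| by
    intro i j y hy
    filter_upwards [eventually_joinedIn (((hV i).inter (hV j)).mem_nhds hy)] with z ⟨γ, hγ⟩
    have hij : (M i).comap f γ = (M j).comap f γ := hM i j _ hγ
    rw [he i γ, he j γ, hij, mul_inv_rev, mul_assoc, inv_mul_cancel_left]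
  refine ⟨c, fun i y z γ hγ => ?_⟩
  have hconst : (e i y)⁻¹ * c y = (e i z)⁻¹ * c z :=
    eq_of_eventually_eq_along_path γ fun t => hc i (γ t) (hγ t)
  calc c z = e i z * ((e i y)⁻¹ * c y) := by rw [hconst, mul_inv_cancel_left]
    _ = (M i).comap f γ * c y := by rw [he i γ, mul_assoc, mul_inv_cancel_left]

theorem isPotentialAlong_const {Y : Type*} [TopologicalSpace Y] (p : X) :
    IsPotentialAlong U M (ContinuousMap.const Y p) fun _ => 1 := fun i y z γ _ => by
  have hγ : (M i).comap (ContinuousMap.const Y p) γ = 1 := (M i).map_refl p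
  rw [hγ, one_mul]

theorem exists_increment (hU : ∀ i, IsOpen (U i)) (hcov : ∀ p, ∃ i, p ∈ U i)
    (hM : ∀ i j, (M i).EqOn (M j) (U i ∩ U j)) :
    ∃ v : C(I, X) → H, ∀ {Y : Type} [TopologicalSpace Y] {f : C(Y, X)} {e : Y → H},
      IsPotentialAlong U M f e → ∀ g : C(I, Y), v (f.comp g) = e (g 1) * (e (g 0))⁻¹ := by
  choose e he using exists_isPotentialAlong (Y := I) hU hcov hM
  exact ⟨fun f => e f 1 * (e f 0)⁻¹,
    fun hf g => (he (_ : C(I, _))).mul_inv_eq hU hcov (hf.comp g) 0 1⟩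

theorem exists_trans_comp_eq {y z w : X} (γ : Path y z) (δ : Path z w) :
    ∃ g h : C(I, I), g 0 = 0 ∧ g 1 = h 0 ∧ h 1 = 1 ∧
      (γ.trans δ : C(I, X)).comp g = γ ∧ (γ.trans δ : C(I, X)).comp h = δ := by
  let m : I := ⟨1 / 2, by norm_num, by norm_num⟩
  have hm : (m : ℝ) = 1 / 2 := rfl
  refine ⟨⟨Icc.convexComb 0 m, by fun_prop⟩, ⟨Icc.convexComb m 1, by fun_prop⟩,
    Icc.convexComb_zero _ _, (Icc.convexComb_one _ _).trans (Icc.convexComb_zero _ _).symm,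
    Icc.convexComb_one _ _, ?_, ?_⟩ <;> ext t
  · change (γ.trans δ) (Icc.convexComb 0 m t) = γ t
    have ht : (Icc.convexComb 0 m t : ℝ) = t / 2 := by
      rw [Icc.coe_convexComb, hm, Icc.coe_zero]
      ring
    rw [← Path.extend_apply, ht, Path.extend_trans_of_le_half _ _ (by linarith [t.2.2]),
      mul_div_cancel₀ _ two_ne_zero, Path.extend_apply]
  · change (γ.trans δ) (Icc.convexComb m 1 t) = δ t
    have ht : (Icc.convexComb m 1 t : ℝ) = (t + 1) / 2 := by
      rw [Icc.coe_convexComb, hm, Icc.coe_one]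
      ring
    rw [← Path.extend_apply, ht, Path.extend_trans_of_half_le _ _ (by linarith [t.2.1]),
      mul_div_cancel₀ _ two_ne_zero, add_sub_cancel_right, Path.extend_apply]

/-- The glued holonomy of a path is the increment of a potential along it; a potential along a
homotopy shows that the two ends of the homotopy have the same increment. -/
theorem exists_glue (hU : ∀ i, IsOpen (U i)) (hcov : ∀ p, ∃ i, p ∈ U i)
    (hM : ∀ i j, (M i).EqOn (M j) (U i ∩ U j)) :
    ∃ N : Holonomy X H, ∀ i, N.EqOn (M i) (U i) := by
  obtain ⟨v, hv⟩ := exists_increment hU hcov hM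
  have v_const : ∀ p, v (.const I p) = 1 := fun p =>
    (hv (isPotentialAlong_const (Y := I) p) (.id I)).trans (mul_inv_cancel 1)
  refine ⟨⟨fun γ => v γ, fun γ δ => ?_, ?_⟩, ?_⟩
  · obtain ⟨e, he⟩ := exists_isPotentialAlong hU hcov hM (γ.trans δ : C(I, X))
    obtain ⟨g, h, hg, hgh, hh, hγ, hδ⟩ := exists_trans_comp_eq γ δ
    calc v (γ.trans δ) = e 1 * (e 0)⁻¹ := hv he (.id I)
      _ = e (h 1) * (e (h 0))⁻¹ * (e (g 1) * (e (g 0))⁻¹) := by rw [hg, hgh, hh]; group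
      _ = v δ * v γ := by rw [← hv he h, ← hv he g, hγ, hδ]
  · rintro y z γ δ ⟨F⟩
    obtain ⟨e, he⟩ := exists_isPotentialAlong hU hcov hM (F : C(I × I, X))
    have side : ∀ t p, (∀ s, F (s, t) = p) → e (1, t) = e (0, t) := fun t p hp => by
      have hF : (F : C(I × I, X)).comp (.prodMk (.id I) (.const I t)) = .const I p :=
        ContinuousMap.ext hp
      exact mul_inv_eq_one.1 ((hv he (.prodMk (.id I) (.const I t))).symm.trans
        ((congrArg v hF).trans (v_const p)))
    have stage : ∀ s, v (F.eval s) = e (s, 1) * (e (s, 0))⁻¹ := fun s =>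
      hv he (.prodMk (.const I s) (.id I))
    calc v γ = v (F.eval 0) := by rw [F.eval_zero]
      _ = v (F.eval 1) := by rw [stage, stage, side 0 y F.source, side 1 z F.target]
      _ = v δ := by rw [F.eval_one]
  · rintro i y z ⟨γ, rfl, rfl⟩ hγ
    obtain ⟨e, he⟩ := exists_isPotentialAlong hU hcov hM γ
    exact (hv he (.id I)).trans (mul_inv_eq_of_eq_mul (he i ⟨.id I, rfl, rfl⟩ hγ))

theorem ext_of_openCover {N N' : Holonomy X H} (hU : ∀ i, IsOpen (U i)) (hcov : ∀ p, ∃ i, p ∈ U i)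
    (h : ∀ i, N.EqOn N' (U i)) : N = N' := by
  ext y z ⟨γ, rfl, rfl⟩
  obtain ⟨e, he⟩ := (N.comap γ).exists_eq_mul
  obtain ⟨e', he'⟩ := (N'.comap γ).exists_eq_mul
  have hpot : IsPotentialAlong U (fun _ => N) γ e := fun i y z δ _ => he δ
  have hpot' : IsPotentialAlong U (fun _ => N) γ e' := fun i y z δ hδ =>
    (he' δ).trans (congrArg (· * e' y) (h i _ hδ).symm)
  let δ : Path (0 : I) 1 := ⟨.id I, rfl, rfl⟩
  have h : e 1 * (e 0)⁻¹ = e' 1 * (e' 0)⁻¹ := hpot.mul_inv_eq hU hcov hpot' 0 1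
  rwa [he δ, he' δ, mul_inv_cancel_right, mul_inv_cancel_right] at h

end Glue

/-- A neighbourhood `nhd` of `x` in which loops at `x` are contractible in `X`, together with a
part `side` of `nhd \ {x}` which paths in `nhd` can only enter or leave through `x`. -/
structure LocalSide {X : Type*} [TopologicalSpace X] (x : X) where
  nhd : Set X
  /-- Only the trace on `nhd` matters. -/
  side : Set X
  isOpen_nhd : IsOpen nhd
  isPathConnected_nhd : IsPathConnected nhd
  mem_nhd : x ∈ nhd
  homotopic_refl : ∀ γ : Path x x, (∀ t, γ t ∈ nhd) → γ.Homotopic (.refl x)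
  notMem_side : x ∉ side
  mem_side_iff : ∀ {y z : X} (γ : Path y z), (∀ t, γ t ∈ nhd \ {x}) → (z ∈ side ↔ y ∈ side)

namespace LocalSide

variable {X : Type u} [TopologicalSpace X] {x : X}

/-- The potential of the twist on the neighbourhood: it jumps by `k` on entering the side. -/
noncomputable def jump {K : Type*} [Group K] (S : LocalSide x) (k : K) (z : X) : K :=
  open scoped Classical in if z ∈ S.side then k else 1

theorem jump_center {K : Type*} [Group K] (S : LocalSide x) (k : K) : S.jump k x = 1 :=
  if_neg S.notMem_side

theorem jump_eq_jump {K : Type*} [Group K] (S : LocalSide x) (k : K) {y z : X} (γ : Path y z)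
    (hγ : ∀ t, γ t ∈ S.nhd \ {x}) : S.jump k z = S.jump k y := by
  rw [jump, jump, propext (S.mem_side_iff γ hγ)]

theorem map_jump {K L : Type*} [Group K] [Group L] (S : LocalSide x) (ψ : K →* L) (k : K) (z : X) :
    ψ (S.jump k z) = S.jump (ψ k) z := by
  simp only [jump, apply_ite ψ, map_one]

theorem jump_one {K : Type*} [Group K] (S : LocalSide x) (z : X) : S.jump (1 : K) z = 1 :=
  ite_self 1

theorem jump_mul {K : Type*} [Group K] (S : LocalSide x) (k l : K) (z : X) :
    S.jump (k * l) z = S.jump k z * S.jump l z := by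
  simp only [jump, ite_mul_ite, one_mul]

/-- The open cover over which twists are glued. -/
def cover (S : LocalSide x) : Bool → Set X
  | true => {x}ᶜ
  | false => S.nhd

theorem isOpen_cover [T1Space X] (S : LocalSide x) (b : Bool) : IsOpen (S.cover b) := by
  cases b
  exacts [S.isOpen_nhd, isOpen_compl_singleton]

theorem exists_mem_cover (S : LocalSide x) (z : X) : ∃ b, z ∈ S.cover b := by
  obtain rfl | hz := eq_or_ne z x
  exacts [⟨false, S.mem_nhd⟩, ⟨true, hz⟩]

variable [PathConnectedSpace X] (S : LocalSide x)

theorem exists_spoke (z : X) : ∃ γ : Path x z, z ∈ S.nhd → ∀ t, γ t ∈ S.nhd := by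
  by_cases hz : z ∈ S.nhd
  · obtain ⟨γ, hγ⟩ := S.isPathConnected_nhd.joinedIn x S.mem_nhd z hz
    exact ⟨γ, fun _ => hγ⟩
  · exact ⟨PathConnectedSpace.somePath x z, fun h => absurd h hz⟩

/-- A path from `x` to `z`, which stays in the neighbourhood if `z` lies in it. -/
noncomputable def spoke (z : X) : Path x z := (S.exists_spoke z).choose

theorem spoke_mem {z : X} (hz : z ∈ S.nhd) : ∀ t, S.spoke z t ∈ S.nhd :=
  (S.exists_spoke z).choose_spec hz

/-- The universal holonomy, trivialised on the neighbourhood. -/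
noncomputable def frame : Holonomy X (FundamentalGroup X x) := Holonomy.closeUp S.spoke

theorem toMonoidHom_frame : S.frame.toMonoidHom x = MonoidHom.id _ :=
  Holonomy.toMonoidHom_closeUp (S.homotopic_refl _ (S.spoke_mem S.mem_nhd))

theorem frame_eq_one {y z : X} (γ : Path y z) (hγ : ∀ t, γ t ∈ S.nhd) : S.frame γ = 1 := by
  refine Path.Homotopic.Quotient.eq.2 (S.homotopic_refl _ (range_subset_iff.1 ?_))
  have hy : y ∈ S.nhd := γ.source ▸ hγ 0
  have hz : z ∈ S.nhd := γ.target ▸ hγ 1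
  rw [Path.trans_range, Path.trans_range, Path.symm_range]
  exact union_subset (union_subset (range_subset_iff.2 (S.spoke_mem hy)) (range_subset_iff.2 hγ))
    (range_subset_iff.2 (S.spoke_mem hz))

variable [T1Space X] {K : Type*} [Group K]

theorem exists_twist (k : K) (φ : FundamentalGroup X x →* K) :
    ∃ N : Holonomy X K, N.EqOn (S.frame.map φ) {x}ᶜ ∧ N.EqOn (.coboundary (S.jump k)) S.nhd := by
  have hM : (S.frame.map φ).EqOn (.coboundary (S.jump k)) ({x}ᶜ ∩ S.nhd) := fun {y z} γ hγ => by
    change φ (S.frame γ) = S.jump k z * (S.jump k y)⁻¹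
    rw [S.frame_eq_one γ fun t => (hγ t).2, map_one, S.jump_eq_jump k γ fun t => (hγ t).symm,
      mul_inv_cancel]
  obtain ⟨N, hN⟩ := exists_glue (U := S.cover)
    (M := fun b => cond b (S.frame.map φ) (.coboundary (S.jump k))) S.isOpen_cover
    S.exists_mem_cover <| by
      rintro (_ | _) (_ | _) y z γ hγ
      exacts [rfl, (hM γ fun t => (hγ t).symm).symm, hM γ hγ, rfl]
  exact ⟨N, hN true, hN false⟩

/-- The holonomy `φ` modified by inserting `k` whenever a path enters the side through `x`. -/
noncomputable def twist (k : K) (φ : FundamentalGroup X x →* K) : Holonomy X K :=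
  (S.exists_twist k φ).choose

theorem twist_eqOn_compl (k : K) (φ : FundamentalGroup X x →* K) :
    (S.twist k φ).EqOn (S.frame.map φ) {x}ᶜ :=
  (S.exists_twist k φ).choose_spec.1

theorem twist_eqOn_nhd (k : K) (φ : FundamentalGroup X x →* K) :
    (S.twist k φ).EqOn (.coboundary (S.jump k)) S.nhd :=
  (S.exists_twist k φ).choose_spec.2

variable {S} in
theorem eq_twist {N : Holonomy X K} {k : K} {φ : FundamentalGroup X x →* K}
    (hN : N.EqOn (S.frame.map φ) {x}ᶜ) (hN' : N.EqOn (.coboundary (S.jump k)) S.nhd) :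
    N = S.twist k φ := by
  refine ext_of_openCover S.isOpen_cover S.exists_mem_cover ?_
  rintro (_ | _) y z γ hγ
  exacts [(hN' γ hγ).trans (S.twist_eqOn_nhd k φ γ hγ).symm,
    (hN γ hγ).trans (S.twist_eqOn_compl k φ γ hγ).symm]

theorem twist_spoke (k : K) (φ : FundamentalGroup X x →* K) {z : X} (hz : z ∈ S.nhd) :
    S.twist k φ (S.spoke z) = S.jump k z := by
  refine (S.twist_eqOn_nhd k φ _ (S.spoke_mem hz)).trans ?_
  change S.jump k z * (S.jump k x)⁻¹ = S.jump k z
  rw [jump_center, inv_one, mul_one]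

/-- The action of the twist on homomorphisms from the fundamental group. -/
noncomputable def twistHom (k : K) (φ : FundamentalGroup X x →* K) : FundamentalGroup X x →* K :=
  (S.twist k φ).toMonoidHom x

theorem comp_twistHom {L : Type*} [Group L] (ψ : K →* L) (k : K) (φ : FundamentalGroup X x →* K) :
    ψ.comp (S.twistHom k φ) = S.twistHom (ψ k) (ψ.comp φ) := by
  have h : (S.twist k φ).map ψ = S.twist (ψ k) (ψ.comp φ) := by
    refine eq_twist (fun γ hγ => congrArg ψ (S.twist_eqOn_compl k φ γ hγ)) fun {y z} γ hγ => ?_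
    refine (congrArg ψ (S.twist_eqOn_nhd k φ γ hγ)).trans ?_
    change ψ (S.jump k z * (S.jump k y)⁻¹) = S.jump (ψ k) z * (S.jump (ψ k) y)⁻¹
    rw [map_mul, map_inv, map_jump, map_jump]
  rw [twistHom, twistHom, ← h, Holonomy.toMonoidHom_map]

theorem twistHom_one (φ : FundamentalGroup X x →* K) : S.twistHom 1 φ = φ := by
  have h : S.frame.map φ = S.twist 1 φ := by
    refine eq_twist (fun γ _ => rfl) fun {y z} γ hγ => ?_
    change φ (S.frame γ) = S.jump 1 z * (S.jump 1 y)⁻¹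
    rw [S.frame_eq_one γ hγ, map_one, jump_one, jump_one, inv_one, mul_one]
  rw [twistHom, ← h, Holonomy.toMonoidHom_map, toMonoidHom_frame, MonoidHom.comp_id]

theorem twistHom_twistHom (k l : K) (φ : FundamentalGroup X x →* K) :
    S.twistHom k (S.twistHom l φ) = S.twistHom (l * k) φ := by
  let g : X → K := fun z => (S.twist l φ (S.spoke z))⁻¹
  have hg : ∀ z ∈ S.nhd, g z = (S.jump l z)⁻¹ := fun z hz => congrArg _ (S.twist_spoke l φ hz)
  have hgx : g x = 1 := by rw [hg x S.mem_nhd, jump_center, inv_one]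
  have hframe : S.frame.map (S.twistHom l φ) = (S.twist l φ).gauge g := Holonomy.map_closeUp _ _
  have h : (S.twist (l * k) φ).gauge g = S.twist k (S.twistHom l φ) := by
    refine eq_twist (fun {y z} γ hγ => ?_) fun {y z} γ hγ => ?_
    · rw [hframe]
      change g z * S.twist (l * k) φ γ * (g y)⁻¹ = g z * S.twist l φ γ * (g y)⁻¹
      rw [S.twist_eqOn_compl _ φ γ hγ, S.twist_eqOn_compl _ φ γ hγ]
    · have hy : y ∈ S.nhd := γ.source ▸ hγ 0
      have hz : z ∈ S.nhd := γ.target ▸ hγ 1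
      change g z * S.twist (l * k) φ γ * (g y)⁻¹ = S.jump k z * (S.jump k y)⁻¹
      rw [S.twist_eqOn_nhd _ φ γ hγ, hg y hy, hg z hz]
      change (S.jump l z)⁻¹ * (S.jump (l * k) z * (S.jump (l * k) y)⁻¹) * _ = _
      rw [jump_mul, jump_mul]
      group
  rw [twistHom, ← h, Holonomy.toMonoidHom_gauge hgx, twistHom]

theorem twistHom_frame {a b : X} (ha : a ∈ S.nhd \ S.side) (hb : b ∈ S.nhd ∩ S.side)
    {η : Path b a} (hη : ∀ t, η t ≠ x) (k : K) (φ : FundamentalGroup X x →* K) :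
    S.twistHom k φ (S.frame η) = φ (S.frame η) * k := by
  have hja : S.jump k a = 1 := if_neg ha.2
  have hjb : S.jump k b = k := if_pos hb.2
  calc S.twistHom k φ (S.frame η)
      = (S.twist k φ (S.spoke a))⁻¹ * S.twist k φ η * ((S.twist k φ (S.spoke b))⁻¹)⁻¹ :=
        congrArg (fun N : Holonomy X K => N η) (Holonomy.map_closeUp S.spoke (S.twist k φ))
    _ = φ (S.frame η) * k := by
        rw [S.twist_spoke k φ ha.1, S.twist_spoke k φ hb.1, hja, hjb,
          S.twist_eqOn_compl k φ η hη, inv_one, one_mul, inv_inv]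
        rfl

theorem nonempty_mulEquiv_coprod_int {a b : X} (ha : a ∈ S.nhd \ S.side)
    (hb : b ∈ S.nhd ∩ S.side) (hab : JoinedIn {x}ᶜ b a) :
    ∃ (G : Type u) (_ : Group G),
      Nonempty (FundamentalGroup X x ≃* Monoid.Coprod G (Multiplicative ℤ)) := by
  obtain ⟨η, hη⟩ := hab
  exact ⟨_, _, nonempty_mulEquiv_coprod_int_of_natural_twist (S.frame η) S.twistHom
    S.comp_twistHom S.twistHom_one S.twistHom_twistHom (S.twistHom_frame ha hb hη)⟩

end LocalSide

theorem mem_closure_of_union_eq_diff_singleton {X : Type*} [TopologicalSpace X] {U A B : Set X}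
    {x : X} (hU : IsPreconnected U) (hxU : x ∈ U) (hA : IsOpen A) (hB : IsOpen B)
    (hAB : Disjoint A B) (h : A ∪ B = U \ {x}) (hne : A.Nonempty) : x ∈ closure A := by
  by_contra hx
  have hAU : A ⊆ U \ {x} := h ▸ subset_union_left
  refine (hAU (hU.subset_of_closure_inter_subset hA ?_ ?_ hxU)).2 rfl
  · exact hne.mono fun y hy => ⟨(hAU hy).1, hy⟩
  · rintro y ⟨hyA, hyU⟩
    have hyx : y ≠ x := fun hyx => hx (hyx ▸ hyA)
    have hyB : y ∉ B := disjoint_left.1 (hAB.closure_left hB) hyA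
    exact (h.ge ⟨hyU, hyx⟩).resolve_right hyB

theorem IsLocalCutPoint.exists_isOpen_disjoint {X : Type} [TopologicalSpace X] [T1Space X] {x : X}
    (h : IsLocalCutPoint X x) :
    ∃ A B : Set X, IsOpen A ∧ IsOpen B ∧ Disjoint A B ∧ x ∉ A ∪ B ∧ insert x (A ∪ B) ∈ 𝓝 x ∧
      x ∈ closure A ∧ x ∈ closure B := by
  obtain ⟨U, hU, hxU, hUc, hsep⟩ := h
  have hUx : IsOpen (U \ {x}) := hU.sdiff isClosed_singleton
  simp only [isPreconnected_iff_subset_of_disjoint, not_forall, not_or] at hsep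
  obtain ⟨u, v, hu, hv, huv, hdisj, hnu, hnv⟩ := hsep
  let A := U \ {x} ∩ u
  let B := U \ {x} ∩ v
  have hA : IsOpen A := hUx.inter hu
  have hB : IsOpen B := hUx.inter hv
  have hAB : Disjoint A B := disjoint_iff_inter_eq_empty.2 (inter_inter_distrib_left _ u v ▸ hdisj)
  have hunion : A ∪ B = U \ {x} := by rw [← inter_union_distrib_left, inter_eq_left.2 huv]
  obtain ⟨a, ha, hav⟩ := not_subset.1 hnv
  obtain ⟨b, hb, hbu⟩ := not_subset.1 hnu
  refine ⟨A, B, hA, hB, hAB, fun hx => (hunion.le hx).2 rfl, ?_, ?_, ?_⟩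
  · rw [hunion, insert_sdiff_singleton, insert_eq_of_mem hxU]
    exact hU.mem_nhds hxU
  · exact mem_closure_of_union_eq_diff_singleton hUc.isPreconnected hxU hA hB hAB hunion
      ⟨a, ha, (huv ha).resolve_right hav⟩
  · exact mem_closure_of_union_eq_diff_singleton hUc.isPreconnected hxU hB hA hAB.symm
      (union_comm A B ▸ hunion) ⟨b, hb, (huv hb).resolve_left hbu⟩

/-- A space is semilocally simply connected at `x` if all loops at `x` in some neighbourhood of
`x` are contractible in the whole space. -/
def IsSemilocallySimplyConnectedAt {X : Type*} [TopologicalSpace X] (x : X) : Prop :=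
  ∃ W ∈ 𝓝 x, ∀ γ : Path x x, (∀ t, γ t ∈ W) → γ.Homotopic (.refl x)

theorem LocSimplyConnected.isSemilocallySimplyConnectedAt {X : Type} [TopologicalSpace X]
    (hX : LocSimplyConnected X) (x : X) : IsSemilocallySimplyConnectedAt x := by
  obtain ⟨V, hV, -, -, hVs⟩ := hX x univ Filter.univ_mem
  refine ⟨V, hV, fun γ hγ => ?_⟩
  obtain ⟨F, -⟩ := (isSimplyConnected_iff_exists_homotopy_refl_forall_mem.1 hVs).2 x γ hγ
  exact ⟨F⟩

theorem LocSimplyConnected.locallyPathConnectedSpace {X : Type} [TopologicalSpace X]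
    (hX : LocSimplyConnected X) : LocallyPathConnectedSpace X where
  path_connected_basis y := by
    refine Filter.hasBasis_self.2 fun U hU => ?_
    obtain ⟨V, hV, hVU, -, hVs⟩ := hX y U hU
    exact ⟨V, hV, isPathConnected_iff_pathConnectedSpace.2 inferInstance, hVU⟩

theorem LocalSide.exists_side_eq {X : Type*} [TopologicalSpace X] [LocallyPathConnectedSpace X]
    {x : X} (hx : IsSemilocallySimplyConnectedAt x) {A B : Set X} (hA : IsOpen A) (hB : IsOpen B)
    (hAB : Disjoint A B) (hxAB : x ∉ A ∪ B) (hnhds : insert x (A ∪ B) ∈ 𝓝 x) :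
    ∃ S : LocalSide x, S.side = B := by
  obtain ⟨W, hW, hloop⟩ := hx
  obtain ⟨V, hV, hVo, hxV⟩ := mem_nhds_iff.1 (Filter.inter_mem hW hnhds)
  have hD : pathComponentIn V x ⊆ V := pathComponentIn_subset
  exact ⟨{
    nhd := pathComponentIn V x
    side := B
    isOpen_nhd := hVo.pathComponentIn x
    isPathConnected_nhd := isPathConnected_pathComponentIn hxV
    mem_nhd := mem_pathComponentIn_self hxV
    homotopic_refl := fun γ hγ => hloop γ fun t => (hV (hD (hγ t))).1
    notMem_side := fun h => hxAB (.inr h)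
    mem_side_iff := fun {y z} γ hγ => by
      have hrange : range γ ⊆ A ∪ B := range_subset_iff.2 fun t =>
        (hV (hD (hγ t).1)).2.resolve_left (hγ t).2
      have hy : y ∈ range γ := ⟨0, γ.source⟩
      have hz : z ∈ range γ := ⟨1, γ.target⟩
      rcases (isPreconnected_range γ.continuous).subset_or_subset hA hB hAB hrange with h | h
      · exact iff_of_false (disjoint_left.1 hAB (h hz)) (disjoint_left.1 hAB (h hy))
      · exact iff_of_true (h hz) (h hy) }, rfl⟩

theorem fundamentalGroup_splits_of_local_cut_point_general
    (X : Type) [TopologicalSpace X] [T1Space X] [PathConnectedSpace X]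
    [LocallyPathConnectedSpace X] (x : X) (hx : IsSemilocallySimplyConnectedAt x)
    (hloc : IsLocalCutPoint X x) (hnot : ¬ IsCutPoint X x) (x₀ : X) :
    ∃ (G : Type) (g : Group G), letI := g;
      Nonempty (FundamentalGroup X x₀ ≃* Monoid.Coprod G (Multiplicative ℤ)) := by
  obtain ⟨A, B, hA, hB, hAB, hxAB, hnhds, hxA, hxB⟩ := hloc.exists_isOpen_disjoint
  obtain ⟨S, rfl⟩ := LocalSide.exists_side_eq hx hA hB hAB hxAB hnhds
  have hS : S.nhd ∈ 𝓝 x := S.isOpen_nhd.mem_nhds S.mem_nhd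
  obtain ⟨a, haS, haA⟩ := mem_closure_iff_nhds.1 hxA _ hS
  obtain ⟨b, hbS, hbB⟩ := mem_closure_iff_nhds.1 hxB _ hS
  have hax : a ≠ x := fun h => hxAB (.inl (h ▸ haA))
  have hbx : b ≠ x := fun h => hxAB (.inr (h ▸ hbB))
  have hcompl : IsPathConnected ({x}ᶜ : Set X) :=
    isOpen_compl_singleton.isConnected_iff_isPathConnected.1 ⟨⟨a, hax⟩, not_not.1 hnot⟩
  obtain ⟨G, g, ⟨e⟩⟩ := S.nonempty_mulEquiv_coprod_int ⟨haS, disjoint_left.1 hAB haA⟩ ⟨hbS, hbB⟩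
    (hcompl.joinedIn b hbx a hax)
  exact ⟨G, g, ⟨(FundamentalGroup.fundamentalGroupMulEquivOfPathConnected x₀ x).trans e⟩⟩

/-- If a path-connected, locally simply connected metric space has a local cut point
which is not a cut point, then its fundamental group splits as `G * ℤ` for some
group `G`. -/
theorem fundamentalGroup_splits_of_local_cut_point
    (X : Type) [MetricSpace X] [PathConnectedSpace X] (hX : LocSimplyConnected X)
    (x : X) (hloc : IsLocalCutPoint X x) (hnot : ¬ IsCutPoint X x) (x₀ : X) :
    ∃ (G : Type) (g : Group G), letI := g;
      Nonempty (FundamentalGroup X x₀ ≃* Monoid.Coprod G (Multiplicative ℤ)) := by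
  have := hX.locallyPathConnectedSpace
  exact fundamentalGroup_splits_of_local_cut_point_general X x
    (hX.isSemilocallySimplyConnectedAt x) hloc hnot x₀
end
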